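/- arXiv:1203.4915 — 4 statements merged into one kernel-verified Lean document; each statement's English description precedes it below -/
import Mathlib

section
/- Let E be a real normed space, X a metric space, and φ : E → X an isometric map such that for every x ∈ X the function a ↦ d(φa, x) is convex on E. Then there exist a real Banach space V and a map j : X → V such that: (1) j is an isometry; (2) j ∘ φ : E → V is linear; (3) for every real Banach space F and every Lipschitz map θ : X → F with θ ∘ φ linear, there exists a unique continuous linear map θ' : V → F with θ' ∘ j = θ, and this θ' satisfies ‖θ'‖ ≤ L(θ), where L(θ) is the Lipschitz constant of θ; and (4) the map λ ↦ λ ∘ j from the continuous dual V* to the set of Lipschitz functions f : X → ℝ with f ∘ φ linear is a bijection satisfying ‖λ‖_{V*} = L(λ ∘ j) for every λ ∈ V*. -/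
/-!
Say that `f : X → ℝ` is admissible if it is `1`-Lipschitz and `f ∘ φ` is linear. The space `V` is
the closed linear span of the point evaluations `j x : f ↦ f x` in the Banach space of bounded
continuous functions on the set of admissible functions. Thus
`‖∑ mᵢ j xᵢ‖ = sup_f |∑ mᵢ f xᵢ|`, which is visibly the right norm for the universal property: if
`θ : X → F` is `K`-Lipschitz and linear on `E`, then for each functional `ψ` on `F` of norm at most
`1` the function `K⁻¹ (ψ ∘ θ)` is admissible (the case `K = 0` being trivial), so
`‖∑ mᵢ θ xᵢ‖ ≤ K ‖∑ mᵢ j xᵢ‖` by Hahn–Banach, and `j x ↦ θ x` extends to `V` with norm at most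
`K` (`arensEells_lift`). The description of the dual is the case `F = ℝ`.

The convexity hypothesis is what makes `j` an isometry: given `x` and `y`, one needs an admissible
`f` with `f x - f y = dist x y` (`exists_admissible_sub_eq`). The convex function
`a ↦ dist (φ a) x` dominates the concave function `a ↦ dist x y - dist (φ a) y`, so an affine
function `s - ℓ` fits between them (`exists_affine_between`). Then `‖ℓ‖ ≤ 1`, and the function
equal to `ℓ` on `E`, to `s` at `x` and to `s - dist x y` at `y` is `1`-Lipschitz, hence extends
to `X` by McShane's theorem.
-/

open scoped NNReal

universe u v w

/-- The (smallest) Lipschitz constant of a map between metric spaces. -/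
noncomputable def lipConst {X : Type*} {F : Type*} [MetricSpace X] [MetricSpace F]
    (f : X → F) : ℝ :=
  sInf {K : ℝ | 0 ≤ K ∧ ∀ x y : X, dist (f x) (f y) ≤ K * dist x y}

/-- Sandwich theorem: separate the strict epigraph of `g` from the hypograph of `h`. -/
theorem exists_affine_between {E : Type*} [NormedAddCommGroup E] [NormedSpace ℝ E] {g h : E → ℝ}
    (hg : ConvexOn ℝ Set.univ g) (hgc : Continuous g) (hh : ConcaveOn ℝ Set.univ h)
    (hle : ∀ a, h a ≤ g a) :
    ∃ (ℓ : E →L[ℝ] ℝ) (s : ℝ), ∀ a, h a ≤ s - ℓ a ∧ s - ℓ a ≤ g a := by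
  have hopen : IsOpen {p : E × ℝ | p.1 ∈ Set.univ ∧ g p.1 < p.2} := by
    simp only [Set.mem_univ, true_and]
    exact isOpen_lt (hgc.comp continuous_fst) continuous_snd
  have hdisj : Disjoint {p : E × ℝ | p.1 ∈ Set.univ ∧ g p.1 < p.2}
      {p : E × ℝ | p.1 ∈ Set.univ ∧ p.2 ≤ h p.1} := by
    rw [Set.disjoint_left]
    rintro p ⟨-, h1⟩ ⟨-, h2⟩
    exact absurd (hle p.1) (not_le.2 (h1.trans_le h2))
  obtain ⟨F, u, hF1, hF2⟩ :=
    geometric_hahn_banach_open hg.convex_strict_epigraph hopen hh.convex_hypograph hdisj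
  have hsplit : ∀ a r, F (a, r) = F (a, 0) + r * F (0, 1) := by
    intro a r
    have : ((a, r) : E × ℝ) = (a, 0) + r • (0, 1) := by simp
    rw [this, map_add, map_smul, smul_eq_mul]
  have h1 : ∀ a r, g a < r → F (a, 0) + r * F (0, 1) < u := fun a r hr => by
    rw [← hsplit]; exact hF1 _ ⟨trivial, hr⟩
  have h2 : ∀ a, u ≤ F (a, 0) + h a * F (0, 1) := fun a => by
    rw [← hsplit]; exact hF2 _ ⟨trivial, le_rfl⟩
  set β := F (0, 1) with hβ
  -- The separating hyperplane is not vertical.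
  have hneg : β < 0 := by
    have h3 := h1 0 (g 0 + 1) (by linarith)
    have h4 := h2 0
    have h5 := hle 0
    by_contra hc
    nlinarith
  refine ⟨β⁻¹ • F.comp (ContinuousLinearMap.inl ℝ E ℝ), u / β, fun a => ?_⟩
  have hval : u / β - (β⁻¹ • F.comp (ContinuousLinearMap.inl ℝ E ℝ)) a = (u - F (a, 0)) / β := by
    simp; ring
  rw [hval]
  constructor
  · rw [le_div_iff_of_neg hneg]
    linarith [h2 a]
  · refine le_of_forall_gt_imp_ge_of_dense fun r hr => ?_
    rw [div_le_iff_of_neg hneg]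
    linarith [h1 a r hr]

/-- The additive constant in a bound on a linear functional disappears on scaling `a` up. -/
theorem apply_le_norm_of_le_add {E : Type*} [NormedAddCommGroup E] [NormedSpace ℝ E]
    (ℓ : E →L[ℝ] ℝ) (C : ℝ) (h : ∀ a, ℓ a ≤ ‖a‖ + C) (a : E) : ℓ a ≤ ‖a‖ := by
  by_contra! hlt
  obtain ⟨n, hn⟩ := exists_nat_gt (C / (ℓ a - ‖a‖))
  have hpos : 0 < ℓ a - ‖a‖ := by linarith
  rw [div_lt_iff₀ hpos] at hn
  have := h ((n : ℝ) • a)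
  rw [map_smul, norm_smul, smul_eq_mul, Real.norm_natCast] at this
  linarith

/-- Admissible functions attain the distance between any two points; this is where convexity of
the distance functions on `E` is used. -/
theorem exists_admissible_sub_eq {E : Type*} [NormedAddCommGroup E] [NormedSpace ℝ E]
    {X : Type*} [MetricSpace X] {φ : E → X} (hφ : Isometry φ)
    (hconv : ∀ x : X, ConvexOn ℝ Set.univ fun a : E => dist (φ a) x) (x y : X) :
    ∃ f : X → ℝ, LipschitzWith 1 f ∧ IsLinearMap ℝ (f ∘ φ) ∧ f x - f y = dist x y := by
  obtain ⟨ℓ, s, hs⟩ := exists_affine_between (g := fun a => dist (φ a) x)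
    (h := fun a => dist x y - dist (φ a) y) (hconv x) (hφ.continuous.dist continuous_const)
    ((concaveOn_const _ convex_univ).sub (hconv y))
    (fun a => by linarith [dist_triangle_left x y (φ a)])
  have hd : ∀ a b, dist (φ a) (φ b) = ‖a - b‖ := fun a b => by rw [hφ.dist_eq, dist_eq_norm]
  have hneg : ∀ a, -ℓ a ≤ ‖a‖ := by
    refine apply_le_norm_of_le_add (-ℓ) (dist (φ 0) x - s) fun a => ?_
    have h1 := (hs a).2
    have h2 := dist_triangle (φ a) (φ 0) x
    rw [hd, sub_zero] at h2
    simp only [neg_apply]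
    linarith
  have habs : ∀ a b, |ℓ a - ℓ b| ≤ ‖a - b‖ := fun a b => by
    have h1 := hneg (a - b)
    have h2 := hneg (b - a)
    rw [norm_sub_rev, map_sub] at h2
    rw [map_sub] at h1
    rw [abs_le]
    constructor <;> linarith
  have hx : ∀ a, |ℓ a - s| ≤ dist (φ a) x := fun a => by
    have h1 := hs a
    have h2 := dist_triangle (φ a) x y
    rw [abs_le]
    constructor <;> linarith
  have hy : ∀ a, |ℓ a - (s - dist x y)| ≤ dist (φ a) y := fun a => by
    have h1 := hs a
    have h2 := dist_triangle_right (φ a) x y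
    rw [abs_le]
    constructor <;> linarith
  -- Parametrize `φ(E) ∪ {x, y}` by `E ⊕ Bool`. The prescribed values `q` descend to a function
  -- on the image of `p`, even if `x` or `y` lies in `φ(E)`, because `dist (q i) (q k)` is at most
  -- `dist (p i) (p k)`.
  let p : E ⊕ Bool → X := Sum.elim φ fun b => if b then x else y
  let q : E ⊕ Bool → ℝ := Sum.elim ℓ fun b => if b then s else s - dist x y
  have hpq : ∀ i k, dist (q i) (q k) ≤ dist (p i) (p k) := by
    rintro (a | _ | _) (b | _ | _)
    · simpa [p, q, hd, Real.dist_eq] using habs a b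
    · simpa [p, q, Real.dist_eq, sub_sub_eq_add_sub] using hy a
    · simpa [p, q, Real.dist_eq] using hx a
    · rw [dist_comm, dist_comm (p _)]; simpa [p, q, Real.dist_eq, sub_sub_eq_add_sub] using hy b
    · simp [p, q]
    · simp [p, q, dist_comm y x]
    · rw [dist_comm, dist_comm (p _)]; simpa [p, q, Real.dist_eq] using hx b
    · simp [p, q]
    · simp [p, q]
  have hfac : ∀ i, Function.extend p q 0 (p i) = q i := by
    have : q.FactorsThrough p := fun i k hik => by
      have := hpq i k
      rw [hik, dist_self] at this
      exact dist_le_zero.1 this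
    exact fun i => this.extend_apply 0 i
  have hlip : LipschitzOnWith 1 (Function.extend p q 0) (Set.range p) := by
    refine LipschitzOnWith.of_dist_le_mul ?_
    rintro _ ⟨i, rfl⟩ _ ⟨k, rfl⟩
    rw [hfac, hfac, NNReal.coe_one, one_mul]
    exact hpq i k
  obtain ⟨f, hf, hfeq⟩ := hlip.extend_real
  have hval : ∀ i, f (p i) = q i := fun i => by rw [← hfeq ⟨i, rfl⟩, hfac]
  refine ⟨f, hf, ?_, ?_⟩
  · have : f ∘ φ = ℓ := funext fun a => hval (.inl a)
    rw [this]
    exact ℓ.toLinearMap.isLinear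
  · have h1 : f x = s := hval (.inr true)
    have h2 : f y = s - dist x y := hval (.inr false)
    rw [h1, h2]; ring

section ArensEells

variable {E : Type u} [NormedAddCommGroup E] [NormedSpace ℝ E] {X : Type v} [MetricSpace X]

/-- The `1`-Lipschitz functions on `X` that are linear on `E`, with the topology of pointwise
convergence. The universe lift puts the space built on it in `Type (max u v)`. -/
abbrev Admissible (φ : E → X) : Type (max u v) :=
  ULift.{u} {f : X → ℝ // LipschitzWith 1 f ∧ IsLinearMap ℝ (f ∘ φ)}

theorem Admissible.abs_sub_le {φ : E → X} (f : Admissible φ) (x y : X) :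
    |f.down.1 x - f.down.1 y| ≤ dist x y := by
  simpa [Real.dist_eq] using f.down.2.1.dist_le_mul x y

/-- Evaluation at `x`, as a bounded continuous function on the admissible functions. -/
noncomputable def evalAt (φ : E → X) (x : X) :
    BoundedContinuousFunction (Admissible φ) ℝ :=
  BoundedContinuousFunction.ofNormedAddCommGroup (fun f => f.down.1 x)
    ((continuous_apply x).comp (continuous_subtype_val.comp continuous_uliftDown))
    (dist x (φ 0)) fun f => by
      have h0 : f.down.1 (φ 0) = 0 := f.down.2.2.map_zero
      simpa [h0] using f.abs_sub_le x (φ 0)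

@[simp]
theorem evalAt_apply (φ : E → X) (x : X) (f : Admissible φ) : evalAt φ x f = f.down.1 x := rfl

/-- The closed span of the point evaluations. -/
noncomputable def evalSpan (φ : E → X) :
    Submodule ℝ (BoundedContinuousFunction (Admissible φ) ℝ) :=
  (LinearMap.range (Finsupp.linearCombination ℝ (evalAt φ))).topologicalClosure

/-- The Arens–Eells space of `X` over `E`. As a type of its own it gets its topology
from its norm, rather than from both the norm and the subspace topology. -/
def ArensEells (φ : E → X) : Type (max u v) := evalSpan φ

noncomputable instance (φ : E → X) : NormedAddCommGroup (ArensEells φ) :=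
  inferInstanceAs (NormedAddCommGroup (evalSpan φ))

noncomputable instance (φ : E → X) : NormedSpace ℝ (ArensEells φ) :=
  inferInstanceAs (NormedSpace ℝ (evalSpan φ))

instance (φ : E → X) : CompleteSpace (ArensEells φ) :=
  (Submodule.isClosed_topologicalClosure _).completeSpace_coe

/-- The inclusion of the Arens–Eells space into the bounded functions on admissible functions. -/
noncomputable def inclusion (φ : E → X) :
    ArensEells φ →ₗᵢ[ℝ] BoundedContinuousFunction (Admissible φ) ℝ :=
  (evalSpan φ).subtypeₗᵢ

/-- The canonical map from the free vector space on `X` to the Arens–Eells space. -/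
noncomputable def fromFree (φ : E → X) : (X →₀ ℝ) →ₗ[ℝ] ArensEells φ :=
  (Finsupp.linearCombination ℝ (evalAt φ)).codRestrict _ fun m =>
    Submodule.le_topologicalClosure _ (LinearMap.mem_range_self _ m)

/-- The canonical map `j` from `X` to the Arens–Eells space. -/
noncomputable def toArensEells (φ : E → X) (x : X) : ArensEells φ :=
  fromFree φ (Finsupp.single x 1)

@[simp]
theorem inclusion_toArensEells (φ : E → X) (x : X) :
    inclusion φ (toArensEells φ x) = evalAt φ x := by
  change Finsupp.linearCombination ℝ (evalAt φ) (Finsupp.single x 1) = _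
  simp

theorem denseRange_fromFree (φ : E → X) : DenseRange (fromFree φ) := by
  intro v
  have hv : (inclusion φ v) ∈ evalSpan φ := v.2
  rw [evalSpan, ← SetLike.mem_coe, Submodule.topologicalClosure_coe] at hv
  rw [(inclusion φ).isometry.isUniformInducing.isInducing.closure_eq_preimage_closure_image,
    Set.mem_preimage]
  convert hv using 2
  ext z
  simp only [Set.mem_image, Set.mem_range, SetLike.mem_coe, LinearMap.mem_range]
  constructor
  · rintro ⟨_, ⟨m, rfl⟩, rfl⟩
    exact ⟨m, rfl⟩
  · rintro ⟨m, rfl⟩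
    exact ⟨_, ⟨m, rfl⟩, rfl⟩

theorem isometry_toArensEells {φ : E → X} (hφ : Isometry φ)
    (hconv : ∀ x : X, ConvexOn ℝ Set.univ fun a : E => dist (φ a) x) :
    Isometry (toArensEells φ) := by
  refine Isometry.of_dist_eq fun x y => ?_
  rw [← (inclusion φ).dist_map, inclusion_toArensEells, inclusion_toArensEells]
  refine le_antisymm ((BoundedContinuousFunction.dist_le dist_nonneg).2 fun f => ?_) ?_
  · simpa [Real.dist_eq] using f.abs_sub_le x y
  · obtain ⟨f, hf, hfl, hxy⟩ := exists_admissible_sub_eq hφ hconv x y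
    refine le_trans ?_ (BoundedContinuousFunction.dist_coe_le_dist (⟨⟨f, hf, hfl⟩⟩ : Admissible φ))
    simp only [evalAt_apply, Real.dist_eq]
    rw [← hxy]
    exact le_abs_self _

theorem isLinearMap_toArensEells (φ : E → X) : IsLinearMap ℝ (toArensEells φ ∘ φ) := by
  constructor
  · intro a b
    refine (inclusion φ).injective ?_
    ext f
    simpa using f.down.2.2.map_add a b
  · intro c a
    refine (inclusion φ).injective ?_
    ext f
    simpa using f.down.2.2.map_smul c a

variable {F : Type w} [NormedAddCommGroup F] [NormedSpace ℝ F]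

/-- The norm estimate behind the universal property: `m ↦ ∑ m x • θ x` is bounded by `K` times
the Arens–Eells norm. -/
theorem norm_linearCombination_le (φ : E → X) {θ : X → F} {K : ℝ≥0} (hθ : LipschitzWith K θ)
    (hlin : IsLinearMap ℝ (θ ∘ φ)) (m : X →₀ ℝ) :
    ‖Finsupp.linearCombination ℝ θ m‖ ≤ K * ‖fromFree φ m‖ := by
  rcases eq_or_ne K 0 with rfl | hK
  · have h0 : ∀ x, θ x = 0 := fun x => by
      have h1 := hθ.dist_le_mul x (φ 0)
      rw [NNReal.coe_zero, zero_mul] at h1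
      have h2 : θ (φ 0) = 0 := hlin.map_zero
      rw [dist_le_zero.1 h1, h2]
    simp [Finsupp.linearCombination_apply, h0]
  obtain ⟨ψ, hψ, hψm⟩ := exists_dual_vector'' ℝ (Finsupp.linearCombination ℝ θ m)
  have hKpos : (0 : ℝ) < K := by exact_mod_cast pos_iff_ne_zero.2 hK
  let f : Admissible φ := ⟨fun x => (K : ℝ)⁻¹ * ψ (θ x), by
    refine LipschitzWith.of_dist_le_mul fun x y => ?_
    have h1 := ψ.le_of_opNorm_le hψ (θ x - θ y)
    have h2 := hθ.dist_le_mul x y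
    rw [dist_eq_norm] at h2
    rw [Real.dist_eq, ← mul_sub, ← map_sub, abs_mul, abs_of_pos (inv_pos.2 hKpos),
      inv_mul_le_iff₀ hKpos, NNReal.coe_one, one_mul]
    exact h1.trans (by linarith), by
    constructor
    · intro a b
      have := hlin.map_add a b
      simp only [Function.comp_apply] at this ⊢
      rw [this, map_add, mul_add]
    · intro c a
      have := hlin.map_smul c a
      simp only [Function.comp_apply] at this ⊢
      rw [this, map_smul, smul_eq_mul, smul_eq_mul]; ring⟩
  have hval : (inclusion φ (fromFree φ m)) f =
      (K : ℝ)⁻¹ * ‖Finsupp.linearCombination ℝ θ m‖ := by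
    have hψm' : ψ (Finsupp.linearCombination ℝ θ m) = ‖Finsupp.linearCombination ℝ θ m‖ := hψm
    rw [← hψm']
    change (Finsupp.linearCombination ℝ (evalAt φ) m) f = _
    simp only [Finsupp.linearCombination_apply, Finsupp.sum, map_sum, map_smul,
      BoundedContinuousFunction.coe_sum, Finset.sum_apply, BoundedContinuousFunction.coe_smul,
      evalAt_apply, smul_eq_mul, Finset.mul_sum, f]
    exact Finset.sum_congr rfl fun x _ => by ring
  have hle := BoundedContinuousFunction.norm_coe_le_norm
    (inclusion φ (fromFree φ m)) f
  rw [hval, Real.norm_of_nonneg (by positivity), inv_mul_le_iff₀ hKpos] at hle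
  exact hle

theorem apply_fromFree {φ : E → X} {θ : X → F} {θ' : ArensEells φ →L[ℝ] F}
    (h : ∀ x, θ' (toArensEells φ x) = θ x) (m : X →₀ ℝ) :
    θ' (fromFree φ m) = Finsupp.linearCombination ℝ θ m := by
  have : θ'.toLinearMap ∘ₗ fromFree φ = Finsupp.linearCombination ℝ θ := by
    ext x
    simpa [toArensEells] using h x
  exact LinearMap.congr_fun this m

/-- The universal property of the Arens–Eells space. -/
theorem arensEells_lift (φ : E → X) [CompleteSpace F] (θ : X → F) (K : ℝ≥0)
    (hθ : LipschitzWith K θ) (hlin : IsLinearMap ℝ (θ ∘ φ)) :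
    (∃! θ' : ArensEells φ →L[ℝ] F, ∀ x : X, θ' (toArensEells φ x) = θ x) ∧
      ∀ θ' : ArensEells φ →L[ℝ] F, (∀ x : X, θ' (toArensEells φ x) = θ x) → ‖θ'‖ ≤ K := by
  have hbd := norm_linearCombination_le φ hθ hlin
  refine ⟨⟨(Finsupp.linearCombination ℝ θ).extendOfNorm (fromFree φ), fun x => ?_, ?_⟩, ?_⟩
  · rw [toArensEells, LinearMap.extendOfNorm_eq (denseRange_fromFree φ) ⟨K, hbd⟩]
    simp
  · intro θ' h
    refine (LinearMap.extendOfNorm_unique (denseRange_fromFree φ) K hbd θ' ?_).symm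
    exact LinearMap.ext (apply_fromFree h)
  · intro θ' h
    refine θ'.opNorm_le_bound K.2 fun v => ?_
    refine (denseRange_fromFree φ).induction_on v (isClosed_le (by fun_prop) (by fun_prop))
      fun m => ?_
    rw [apply_fromFree h]
    exact hbd m

end ArensEells

/-- The Arens–Eells space of a metric space `X` over a normed space `E`: given an
isometric `φ : E → X` such that `a ↦ d(φ a, x)` is convex for every `x ∈ X`, there is a
Banach space `V` with an isometric `j : X → V` which is linear on `E`, universal for
Lipschitz maps to Banach spaces that are linear on `E`, and whose dual is identified with
the space of Lipschitz functions on `X` that are linear on `E`, with matching norms. -/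
theorem relative_arens_eells (E : Type u) [NormedAddCommGroup E] [NormedSpace ℝ E]
    (X : Type v) [MetricSpace X] (φ : E → X) (hφ : Isometry φ)
    (hconv : ∀ x : X, ConvexOn ℝ Set.univ fun a : E => dist (φ a) x) :
    ∃ (V : Type (max u v)) (_ : NormedAddCommGroup V) (_ : NormedSpace ℝ V)
      (_ : CompleteSpace V) (j : X → V),
      Isometry j ∧ IsLinearMap ℝ (j ∘ φ) ∧
      (∀ (F : Type w) (_ : NormedAddCommGroup F) (_ : NormedSpace ℝ F) (_ : CompleteSpace F)
          (θ : X → F) (K : ℝ≥0), LipschitzWith K θ → IsLinearMap ℝ (θ ∘ φ) →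
        (∃! θ' : V →L[ℝ] F, ∀ x : X, θ' (j x) = θ x) ∧
        ∀ θ' : V →L[ℝ] F, (∀ x : X, θ' (j x) = θ x) → ‖θ'‖ ≤ K) ∧
      (∀ lam mu : V →L[ℝ] ℝ, (∀ x : X, lam (j x) = mu (j x)) → lam = mu) ∧
      (∀ f : X → ℝ, (∃ K : ℝ≥0, LipschitzWith K f) → IsLinearMap ℝ (f ∘ φ) →
        ∃ lam : V →L[ℝ] ℝ, ∀ x : X, lam (j x) = f x) ∧
      (∀ lam : V →L[ℝ] ℝ, (∃ K : ℝ≥0, LipschitzWith K fun x : X => lam (j x)) ∧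
        IsLinearMap ℝ ((fun x : X => lam (j x)) ∘ φ) ∧
        ‖lam‖ = lipConst fun x : X => lam (j x)) := by
  have hlam : ∀ lam : ArensEells φ →L[ℝ] ℝ,
      LipschitzWith ‖lam‖₊ (fun x => lam (toArensEells φ x)) ∧
        IsLinearMap ℝ ((fun x => lam (toArensEells φ x)) ∘ φ) := fun lam => by
    constructor
    · have h := lam.lipschitz.comp (isometry_toArensEells hφ hconv).lipschitz
      rw [mul_one] at h
      exact h
    · exact (lam.toLinearMap ∘ₗ (isLinearMap_toArensEells φ).mk').isLinear
  refine ⟨ArensEells φ, inferInstance, inferInstance, inferInstance, toArensEells φ,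
    isometry_toArensEells hφ hconv, isLinearMap_toArensEells φ, ?_, ?_, ?_, ?_⟩
  · intro F _ _ _ θ K hθ hlin
    exact arensEells_lift φ θ K hθ hlin
  · intro lam mu h
    exact (arensEells_lift φ _ _ (hlam mu).1 (hlam mu).2).1.unique h fun _ => rfl
  · rintro f ⟨K, hf⟩ hlin
    exact (arensEells_lift φ f K hf hlin).1.exists
  · intro lam
    refine ⟨⟨_, (hlam lam).1⟩, (hlam lam).2, le_antisymm ?_ ?_⟩
    · refine le_csInf ⟨‖lam‖, norm_nonneg _, (hlam lam).1.dist_le_mul⟩ ?_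
      rintro K ⟨hK0, hK⟩
      exact (arensEells_lift φ _ ⟨K, hK0⟩ (LipschitzWith.of_dist_le_mul hK) (hlam lam).2).2 lam
        fun _ => rfl
    · exact csInf_le ⟨0, fun K hK => hK.1⟩ ⟨norm_nonneg _, (hlam lam).1.dist_le_mul⟩
end

section
/- Let E be a real normed space and let X be a set of convex Katětov functions on E, equipped with the supremum metric, such that for every b ∈ E the function δ_b : a ↦ ‖a − b‖ belongs to X. Then there exist a real Banach space V, a linear isometric embedding i : E → V, and an isometric map j : X → V with j(δ_b) = i(b) for all b ∈ E, such that: (1) for every real Banach space F and every Lipschitz map θ : X → F for which b ↦ θ(δ_b) is linear on E, there exists a unique continuous linear map θ' : V → F with θ' ∘ j = θ, and this θ' satisfies ‖θ'‖ ≤ L(θ); and (2) the closed linear span of j(X) in V is all of V. -/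
/-!
The space `V` is the closed linear span, inside `ℓ^∞(Φ)`, of the evaluations
`j ξ : φ ↦ φ ξ`, where `Φ` is the set of `1`-Lipschitz functions `φ : X → ℝ` such that
`b ↦ φ (δ_b)` is linear.

* *Universality.* If `θ : X → F` is `K`-Lipschitz with `K > 0` and linear on `E`, and `g` is a
  functional on `F` of norm at most `1`, then `K⁻¹ • g ∘ θ` belongs to `Φ`. Taking `g` to be a
  norming functional of `∑ c_ξ θ ξ` yields `‖∑ c_ξ θ ξ‖ ≤ K ‖∑ c_ξ j ξ‖`
  (`norm_linearCombination_le`), so `j ξ ↦ θ ξ` extends to `V` with norm at most `K`.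

* *`j` is isometric.* Evaluations are `1`-Lipschitz by the choice of `Φ`. Conversely, fix `a ∈ E`,
  `ε > 0` and `ξ, η ∈ X`. As `ξ` is convex and continuous, Hahn–Banach gives an affine function
  `-f + c` below `ξ` with value `ξ a - ε` at `a`; since `ξ` is `1`-Lipschitz, `f ≤ ‖·‖`
  (`exists_approx_subgradient`). The largest `1`-Lipschitz extension
  `ζ ↦ inf_b (f b + ζ b)` of `δ_b ↦ f b` lies in `Φ` (`infExt_mem_testFun`), takes a value at
  least `f a + ξ a - ε` at `ξ`, and at most `f a + η a` at `η`. Hence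
  `ξ a - η a - ε ≤ ‖j ξ - j η‖`. Convexity is used only here.

Since every `φ ∈ Φ` is linear on `E`, the map `i b = j (δ_b)` is linear, and it is isometric
because `‖i b‖ = ‖j (δ_b) - j (δ_0)‖ = supDist δ_b δ_0 = ‖b‖`.
-/

universe u w

/-- A function `ξ` on a metric space is *Katětov* if `|ξ x - ξ y| ≤ d(x,y)` and
`d(x,y) ≤ ξ x + ξ y` for all `x, y`. -/
def IsKatetov {X : Type*} [MetricSpace X] (ξ : X → ℝ) : Prop :=
  ∀ x y : X, |ξ x - ξ y| ≤ dist x y ∧ dist x y ≤ ξ x + ξ y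

/-- The supremum distance between two real-valued functions. -/
noncomputable def supDist {E : Type*} (ξ η : E → ℝ) : ℝ :=
  ⨆ a : E, |ξ a - η a|

namespace ConvexKatetov

section Katetov

lemma supDist_nonneg {E : Type u} (ξ η : E → ℝ) : 0 ≤ supDist ξ η :=
  Real.iSup_nonneg fun _ => abs_nonneg _

variable {E : Type u} [NormedAddCommGroup E]

lemma bddAbove_abs_sub {ξ η : E → ℝ} (hξ : IsKatetov ξ) (hη : IsKatetov η) :
    BddAbove (Set.range fun a => |ξ a - η a|) := by
  refine ⟨ξ 0 + η 0, ?_⟩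
  rintro _ ⟨a, rfl⟩
  have h1 := abs_le.1 (hξ a 0).1
  have h2 := abs_le.1 (hη a 0).1
  have h3 := (hξ a 0).2
  have h4 := (hη a 0).2
  exact abs_le.2 ⟨by linarith, by linarith⟩

lemma abs_sub_le_supDist {ξ η : E → ℝ} (hξ : IsKatetov ξ) (hη : IsKatetov η) (a : E) :
    |ξ a - η a| ≤ supDist ξ η :=
  le_ciSup (bddAbove_abs_sub hξ hη) a

lemma supDist_norm_sub (b : E) :
    supDist (fun a : E => ‖a - b‖) (fun a : E => ‖a - 0‖) = ‖b‖ := by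
  have h : ∀ a : E, |‖a - b‖ - ‖a - 0‖| ≤ ‖b‖ := fun a => by
    simpa using abs_norm_sub_norm_le (a - b) (a - 0)
  refine le_antisymm (ciSup_le h) ?_
  refine le_trans ?_ (le_ciSup (f := fun a : E => |‖a - b‖ - ‖a - 0‖|) ⟨‖b‖, ?_⟩ 0)
  · simp
  · rintro _ ⟨a, rfl⟩
    exact h a

/-- The distance from a Katětov function to `δ_0` is at most its value at `0`. -/
lemma supDist_norm_zero_le {ξ : E → ℝ} (hξ : IsKatetov ξ) :
    supDist ξ (fun a : E => ‖a - 0‖) ≤ ξ 0 := by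
  refine ciSup_le fun a => ?_
  have h1 := abs_le.1 (hξ a 0).1
  have h3 := (hξ a 0).2
  simp only [dist_zero_right] at h1 h3
  simp only [sub_zero]
  exact abs_le.2 ⟨by linarith, by linarith⟩

/-- An `ε`-subgradient of a convex Katětov function at `a`, with the sign reversed. The bound
`f ≤ ‖·‖` comes from comparing growth rates along rays from `a`. -/
lemma exists_approx_subgradient [NormedSpace ℝ E] {ξ : E → ℝ} (hξ : IsKatetov ξ)
    (hc : ConvexOn ℝ Set.univ ξ) (a : E) {ε : ℝ} (hε : 0 < ε) :
    ∃ f : E →ₗ[ℝ] ℝ, (∀ x, f x ≤ ‖x‖) ∧ ∀ b, f a + ξ a - ε ≤ f b + ξ b := by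
  have hcont : Continuous ξ := by
    refine (LipschitzWith.of_dist_le_mul (K := 1) fun x y => ?_).continuous
    simpa [Real.dist_eq] using (hξ x y).1
  obtain ⟨l, c, hle, heq⟩ := hc.exists_affine_le_of_lt (𝕜 := ℝ) (Set.mem_univ a)
    (show ξ a - ε < ξ a by linarith) isClosed_univ
    (hcont.lowerSemicontinuous.lowerSemicontinuousOn _)
  have hle' : ∀ b, l b + c ≤ ξ b := fun b => by simpa using hle ⟨b, Set.mem_univ b⟩
  have heq' : l a + c = ξ a - ε := by simpa using heq
  refine ⟨-l.toLinearMap, fun x => ?_, fun b => ?_⟩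
  · by_contra! hx
    simp only [LinearMap.neg_apply, ContinuousLinearMap.coe_coe] at hx
    have hd : 0 < -l x - ‖x‖ := by linarith
    -- along `a - t x` the affine function would outgrow `ξ` by `t (-l x - ‖x‖) - ε`
    obtain ⟨t, ht⟩ : ∃ t : ℝ, t = 2 * ε / (-l x - ‖x‖) := ⟨_, rfl⟩
    have ht0 : 0 < t := by rw [ht]; positivity
    have hmul : t * (-l x - ‖x‖) = 2 * ε := by rw [ht]; field_simp
    have h1 := hle' (a - t • x)
    have h2 := (abs_le.1 (hξ (a - t • x) a).1).2
    have h3 : dist (a - t • x) a = t * ‖x‖ := by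
      rw [dist_eq_norm, sub_sub_cancel_left, norm_neg, norm_smul, Real.norm_of_nonneg ht0.le]
    rw [h3] at h2
    simp only [map_sub, map_smul, smul_eq_mul] at h1
    nlinarith
  · have := hle' b
    simp only [LinearMap.neg_apply, ContinuousLinearMap.coe_coe]
    linarith

end Katetov

section Construction

variable {E : Type u} [NormedAddCommGroup E] [NormedSpace ℝ E] {X : Set (E → ℝ)}

/-- The test functions on `X`: the real functions that are `1`-Lipschitz for the supremum metric
and linear on the copy `b ↦ δ_b` of `E`. -/
def testFun (X : Set (E → ℝ)) (hδ : ∀ b : E, (fun a : E => ‖a - b‖) ∈ X) : Set (X → ℝ) :=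
  {φ | (∀ ξ η : X, |φ ξ - φ η| ≤ supDist (ξ : E → ℝ) (η : E → ℝ)) ∧
    IsLinearMap ℝ (fun b : E => φ ⟨fun a : E => ‖a - b‖, hδ b⟩)}

/-- The McShane extension to `X` of the functional `δ_b ↦ f b`: the largest `1`-Lipschitz one
when `f ≤ ‖·‖`, since the distance from `δ_b` to `ζ` is `ζ b`. -/
noncomputable def infExt (X : Set (E → ℝ)) (f : E →ₗ[ℝ] ℝ) (ζ : X) : ℝ :=
  ⨅ b : E, (f b + (ζ : E → ℝ) b)

lemma infExt_le (hX : ∀ ξ ∈ X, IsKatetov ξ) {f : E →ₗ[ℝ] ℝ} (hf : ∀ x, f x ≤ ‖x‖) (ζ : X)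
    (b : E) : infExt X f ζ ≤ f b + (ζ : E → ℝ) b := by
  refine ciInf_le (f := fun b : E => f b + (ζ : E → ℝ) b) ⟨-(ζ : E → ℝ) 0, ?_⟩ b
  rintro _ ⟨b, rfl⟩
  have h1 := (hX ζ ζ.2 b 0).2
  have h2 := hf (-b)
  simp only [dist_zero_right, map_neg, norm_neg] at h1 h2
  dsimp only
  linarith

lemma infExt_mem_testFun (hX : ∀ ξ ∈ X, IsKatetov ξ)
    (hδ : ∀ b : E, (fun a : E => ‖a - b‖) ∈ X) {f : E →ₗ[ℝ] ℝ} (hf : ∀ x, f x ≤ ‖x‖) :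
    infExt X f ∈ testFun X hδ := by
  have key : ∀ ξ η : X, infExt X f ξ ≤ infExt X f η + supDist (ξ : E → ℝ) (η : E → ℝ) := by
    intro ξ η
    rw [← sub_le_iff_le_add]
    refine le_ciInf fun b => ?_
    have h1 := infExt_le hX hf ξ b
    have h2 := (abs_le.1 (abs_sub_le_supDist (hX ξ ξ.2) (hX η η.2) b)).2
    linarith
  have hval : ∀ b : E, infExt X f ⟨fun a : E => ‖a - b‖, hδ b⟩ = f b := by
    intro b
    refine le_antisymm ?_ (le_ciInf fun a => ?_)
    · simpa using infExt_le hX hf ⟨fun a : E => ‖a - b‖, hδ b⟩ b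
    · have h := hf (b - a)
      rw [map_sub, norm_sub_rev] at h
      dsimp only
      linarith
  refine ⟨fun ξ η => ?_, ?_⟩
  · have h1 := key ξ η
    have h2 := key η ξ
    have h3 : supDist (η : E → ℝ) (ξ : E → ℝ) = supDist (ξ : E → ℝ) (η : E → ℝ) := by
      simp only [supDist, abs_sub_comm]
    exact abs_le.2 ⟨by linarith, by linarith⟩
  · simp only [hval]
    exact f.isLinear

lemma apply_norm_zero {hδ : ∀ b : E, (fun a : E => ‖a - b‖) ∈ X} {φ : X → ℝ}
    (hφ : φ ∈ testFun X hδ) : φ ⟨fun a : E => ‖a - 0‖, hδ 0⟩ = 0 :=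
  hφ.2.map_zero

lemma abs_testFun_le (hX : ∀ ξ ∈ X, IsKatetov ξ) {hδ : ∀ b : E, (fun a : E => ‖a - b‖) ∈ X}
    {φ : X → ℝ} (hφ : φ ∈ testFun X hδ) (ξ : X) : |φ ξ| ≤ (ξ : E → ℝ) 0 := by
  have h := hφ.1 ξ ⟨fun a : E => ‖a - 0‖, hδ 0⟩
  rw [apply_norm_zero hφ, sub_zero] at h
  exact h.trans (supDist_norm_zero_le (hX ξ ξ.2))

/-- Evaluation at `ξ`, as a bounded function on the test functions. -/
noncomputable def evalAt (hX : ∀ ξ ∈ X, IsKatetov ξ)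
    (hδ : ∀ b : E, (fun a : E => ‖a - b‖) ∈ X) (ξ : X) : lp (fun _ : testFun X hδ => ℝ) ⊤ :=
  ⟨fun φ => φ.1 ξ, memℓp_infty ⟨(ξ : E → ℝ) 0, by
    rintro _ ⟨φ, rfl⟩
    exact abs_testFun_le hX φ.2 ξ⟩⟩

lemma norm_evalAt_sub (hX : ∀ ξ ∈ X, IsKatetov ξ ∧ ConvexOn ℝ Set.univ ξ)
    (hδ : ∀ b : E, (fun a : E => ‖a - b‖) ∈ X) (ξ η : X) :
    ‖evalAt (fun ξ h => (hX ξ h).1) hδ ξ - evalAt (fun ξ h => (hX ξ h).1) hδ η‖ =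
      supDist (ξ : E → ℝ) (η : E → ℝ) := by
  have hK : ∀ ξ ∈ X, IsKatetov ξ := fun ξ h => (hX ξ h).1
  have key : ∀ (ξ η : X) (a : E), (ξ : E → ℝ) a - (η : E → ℝ) a ≤
      ‖evalAt hK hδ ξ - evalAt hK hδ η‖ := by
    intro ξ η a
    refine le_of_forall_pos_le_add fun ε hε => ?_
    obtain ⟨f, hf, hsub⟩ := exists_approx_subgradient (hX ξ ξ.2).1 (hX ξ ξ.2).2 a hε
    have h1 : f a + (ξ : E → ℝ) a - ε ≤ infExt X f ξ := le_ciInf hsub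
    have h2 := infExt_le hK hf η a
    have h3 := lp.norm_apply_le_norm ENNReal.top_ne_zero (evalAt hK hδ ξ - evalAt hK hδ η)
      ⟨infExt X f, infExt_mem_testFun hK hδ hf⟩
    have h4 : infExt X f ξ - infExt X f η ≤ ‖evalAt hK hδ ξ - evalAt hK hδ η‖ :=
      (le_abs_self _).trans h3
    linarith
  refine le_antisymm (lp.norm_le_of_forall_le (supDist_nonneg _ _) fun φ => φ.2.1 ξ η)
    (ciSup_le fun a => abs_le'.2 ⟨key ξ η a, ?_⟩)
  rw [neg_sub, norm_sub_rev]
  exact key η ξ a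

/-- The formal linear combinations of elements of `X` are sent to the same combinations of
evaluations. -/
noncomputable def evalLin (hX : ∀ ξ ∈ X, IsKatetov ξ)
    (hδ : ∀ b : E, (fun a : E => ‖a - b‖) ∈ X) :
    (X →₀ ℝ) →ₗ[ℝ] lp (fun _ : testFun X hδ => ℝ) ⊤ :=
  Finsupp.linearCombination ℝ (evalAt hX hδ)

lemma evalLin_apply (hX : ∀ ξ ∈ X, IsKatetov ξ) (hδ : ∀ b : E, (fun a : E => ‖a - b‖) ∈ X)
    (c : X →₀ ℝ) (φ : testFun X hδ) :
    (evalLin hX hδ c : testFun X hδ → ℝ) φ = Finsupp.linearCombination ℝ φ.1 c := by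
  induction c using Finsupp.induction_linear with
  | zero => simp
  | add c d hc hd => rw [map_add, map_add, lp.coeFn_add, Pi.add_apply, hc, hd]
  | single ξ r => simp [evalLin, evalAt]

/-- The norm of a combination of evaluations dominates, up to the factor `K`, the norm of the
corresponding combination of values of any `K`-Lipschitz map that is linear on `E`. -/
lemma norm_linearCombination_le (hX : ∀ ξ ∈ X, IsKatetov ξ)
    (hδ : ∀ b : E, (fun a : E => ‖a - b‖) ∈ X) {F : Type w} [NormedAddCommGroup F]
    [NormedSpace ℝ F] {θ : X → F} {K : ℝ} (hK : 0 ≤ K)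
    (hθ : ∀ ξ η : X, ‖θ ξ - θ η‖ ≤ K * supDist (ξ : E → ℝ) (η : E → ℝ))
    (hlin : IsLinearMap ℝ (fun b : E => θ ⟨fun a : E => ‖a - b‖, hδ b⟩)) (c : X →₀ ℝ) :
    ‖Finsupp.linearCombination ℝ θ c‖ ≤ K * ‖evalLin hX hδ c‖ := by
  rcases hK.eq_or_lt with rfl | hK
  · -- a constant map that is linear on `E` vanishes
    have h0 : θ = 0 := by
      funext ξ
      have h := hθ ξ ⟨fun a : E => ‖a - 0‖, hδ 0⟩
      have h' : θ ⟨fun a : E => ‖a - 0‖, hδ 0⟩ = 0 := hlin.map_zero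
      rw [zero_mul, h', sub_zero] at h
      simpa using h
    subst h0
    simp
  obtain ⟨g, hg, hgv⟩ := exists_dual_vector'' ℝ (Finsupp.linearCombination ℝ θ c)
  have hφ : (fun ξ => K⁻¹ * g (θ ξ)) ∈ testFun X hδ := by
    refine ⟨fun ξ η => ?_, ⟨fun x y => ?_, fun r x => ?_⟩⟩
    · rw [← mul_sub, ← map_sub, abs_mul, abs_of_pos (inv_pos.2 hK), inv_mul_le_iff₀ hK]
      refine le_trans ?_ (hθ ξ η)
      simpa using g.le_of_opNorm_le hg (θ ξ - θ η)
    · have h := hlin.map_add x y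
      dsimp only at h ⊢
      rw [h, map_add, mul_add]
    · have h := hlin.map_smul r x
      dsimp only at h ⊢
      rw [h, map_smul, smul_eq_mul, smul_eq_mul, mul_left_comm]
  have h1 := lp.norm_apply_le_norm ENNReal.top_ne_zero (evalLin hX hδ c) ⟨_, hφ⟩
  have h2 : Finsupp.linearCombination ℝ (fun ξ => K⁻¹ * g (θ ξ)) c =
      K⁻¹ * g (Finsupp.linearCombination ℝ θ c) := by
    simp only [Finsupp.linearCombination_apply, Finsupp.sum, map_sum, map_smul, smul_eq_mul,
      Finset.mul_sum, mul_left_comm]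
  rw [evalLin_apply, h2, hgv] at h1
  have h3 := (le_abs_self _).trans h1
  simpa using (inv_mul_le_iff₀ hK).1 h3

end Construction

end ConvexKatetov

open ConvexKatetov

/-- Given a set `X` of convex Katětov functions on `E` (with the supremum metric)
containing every `δ_b = ‖· - b‖`, there is a Banach space `E[X]` containing `E`
isometrically linearly and `X` isometrically, with `δ_b` going to the copy of `b`,
universal for Lipschitz maps into Banach spaces that are linear on `E`, and
generated as a Banach space by (the image of) `X`. -/
theorem banach_space_over_convex_katetov_set (E : Type u) [NormedAddCommGroup E]
    [NormedSpace ℝ E] (X : Set (E → ℝ))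
    (hX : ∀ ξ ∈ X, IsKatetov ξ ∧ ConvexOn ℝ Set.univ ξ)
    (hδ : ∀ b : E, (fun a : E => ‖a - b‖) ∈ X) :
    ∃ (V : Type u) (_ : NormedAddCommGroup V) (_ : NormedSpace ℝ V) (_ : CompleteSpace V)
      (i : E →ₗᵢ[ℝ] V) (j : X → V),
      (∀ ξ η : X, ‖j ξ - j η‖ = supDist (ξ : E → ℝ) (η : E → ℝ)) ∧
      (∀ b : E, j ⟨fun a : E => ‖a - b‖, hδ b⟩ = i b) ∧
      (∀ (F : Type w) (_ : NormedAddCommGroup F) (_ : NormedSpace ℝ F) (_ : CompleteSpace F)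
          (θ : X → F) (K : ℝ), 0 ≤ K →
        (∀ ξ η : X, ‖θ ξ - θ η‖ ≤ K * supDist (ξ : E → ℝ) (η : E → ℝ)) →
        IsLinearMap ℝ (fun b : E => θ ⟨fun a : E => ‖a - b‖, hδ b⟩) →
        (∃! θ' : V →L[ℝ] F, ∀ ξ : X, θ' (j ξ) = θ ξ) ∧
        ∀ θ' : V →L[ℝ] F, (∀ ξ : X, θ' (j ξ) = θ ξ) → ‖θ'‖ ≤ K) ∧
      Dense (Submodule.span ℝ (Set.range j) : Set V) := by
  have hK : ∀ ξ ∈ X, IsKatetov ξ := fun ξ h => (hX ξ h).1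
  let S := LinearMap.range (evalLin hK hδ)
  let V := S.topologicalClosure
  let e : (X →₀ ℝ) →ₗ[ℝ] V := (evalLin hK hδ).codRestrict V fun c =>
    S.le_topologicalClosure (LinearMap.mem_range_self _ c)
  let j : X → V := fun ξ => e (Finsupp.single ξ 1)
  have hj : ∀ ξ, (j ξ : lp (fun _ : testFun X hδ => ℝ) ⊤) = evalAt hK hδ ξ := fun ξ => by
    simp [j, e, evalLin]
  have hnorm : ∀ ξ η : X, ‖j ξ - j η‖ = supDist (ξ : E → ℝ) (η : E → ℝ) := fun ξ η => by
    rw [← norm_evalAt_sub hX hδ ξ η, ← hj, ← hj]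
    rfl
  have hlinj : IsLinearMap ℝ (fun b : E => j ⟨fun a : E => ‖a - b‖, hδ b⟩) := by
    refine ⟨fun x y => ?_, fun r x => ?_⟩ <;> apply Subtype.ext <;> apply lp.ext <;> funext φ
    · simpa [hj] using! φ.2.2.map_add x y
    · simpa [hj] using! φ.2.2.map_smul r x
  have he : ∀ c, e c = Finsupp.linearCombination ℝ j c := fun c => by
    induction c using Finsupp.induction_linear with
    | zero => simp
    | add c d hc hd => rw [map_add, map_add, hc, hd]
    | single ξ r => simp [j, ← map_smul]
  have hdense : DenseRange e := by
    refine Subtype.dense_iff.2 fun x hx => closure_mono ?_ hx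
    rintro _ ⟨c, rfl⟩
    exact ⟨e c, ⟨c, rfl⟩, rfl⟩
  have hspan : Dense (Submodule.span ℝ (Set.range j) : Set V) := by
    refine Dense.mono ?_ hdense
    rintro _ ⟨c, rfl⟩
    rw [he, ← Finsupp.range_linearCombination]
    exact LinearMap.mem_range_self _ c
  refine ⟨V, inferInstance, inferInstance, S.isClosed_topologicalClosure.completeSpace_coe,
    ⟨hlinj.mk' _, fun b => ?_⟩, j, hnorm, fun b => rfl, ?_, hspan⟩
  · have h0 : j ⟨fun a : E => ‖a - 0‖, hδ 0⟩ = 0 := hlinj.map_zero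
    have h := hnorm ⟨fun a : E => ‖a - b‖, hδ b⟩ ⟨fun a : E => ‖a - 0‖, hδ 0⟩
    rw [h0, sub_zero, supDist_norm_sub] at h
    exact h
  · intro F _ _ _ θ K hK0 hθ hlin
    have hb : ∀ c, ‖Finsupp.linearCombination ℝ θ c‖ ≤ K * ‖e c‖ :=
      norm_linearCombination_le hK hδ hK0 hθ hlin
    let T : V →L[ℝ] F := (Finsupp.linearCombination ℝ θ).extendOfNorm e
    have hT : ∀ ξ, T (j ξ) = θ ξ := fun ξ => by
      refine (LinearMap.extendOfNorm_eq hdense ⟨K, hb⟩ _).trans ?_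
      simp
    have huniq : ∀ T' : V →L[ℝ] F, (∀ ξ, T' (j ξ) = θ ξ) → T' = T := fun T' h => by
      refine ContinuousLinearMap.ext_on hspan ?_
      rintro _ ⟨ξ, rfl⟩
      rw [h, hT]
    refine ⟨⟨T, hT, huniq⟩, fun T' h => ?_⟩
    rw [huniq T' h]
    exact LinearMap.opNorm_extendOfNorm_le hdense hK0 hb
end

section
/- For every separable real Banach space E there exist a separable real Banach space G and a linear isometric embedding of E into G such that G has the Gurarij property. In particular (taking E trivial), a Gurarij space exists. -/
/-!
A separable Gurarij space containing `E` is obtained by a Baire category argument. Consider the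
seminorms on `V = E × (ℕ →₀ ℝ)` that extend the norm of `E` and are at most `1` on the standard basis
vectors of the second factor. With pointwise convergence they form a nonempty compact Hausdorff
space, hence a Baire space. The Gurarij space is the completion of `V` for a generic such seminorm.

The Gurarij property follows, by perturbation, from the solution of countably many approximate
extension problems: prescribed approximate images of some of the coordinates in a countable net of
`V`, a seminorm on `ℝ^(k + l)` from a countable dense family, and a tolerance `1 / (n + 1)`
(`gurarijProperty_of_generic`). The seminorms solving a given problem form an open set, by compactness
of the unit ball of `ℝ^(k + l)` (`admissible.isOpen_solved`). This set is dense
(`admissible.dense_solved`): a basic open set constrains only finitely many vectors of `V`, which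
leaves infinitely many basis vectors unused, and a seminorm that is not yet a solution can be
redefined on unused vectors by amalgamating it with the seminorm on `ℝ^(k + l)`
(`exists_amalgam`, a pushout with an error term).
-/

universe u

/-- A real normed space `G` has the *Gurarij property* if for every `ε > 0`, every
finite-dimensional real normed space `F`, every subspace `E₀ ⊆ F` and every linear
isometric embedding `ψ : E₀ → G`, there is a linear map `φ : F → G` extending `ψ` with
`(1 - ε)‖x‖ ≤ ‖φ x‖ ≤ (1 + ε)‖x‖` for all `x ∈ F`. -/
def GurarijProperty (G : Type*) [NormedAddCommGroup G] [NormedSpace ℝ G] : Prop :=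
  ∀ ε : ℝ, 0 < ε →
    ∀ (F : Type) (_ : NormedAddCommGroup F) (_ : NormedSpace ℝ F), FiniteDimensional ℝ F →
      ∀ (E₀ : Submodule ℝ F) (ψ : E₀ →ₗᵢ[ℝ] G),
        ∃ φ : F →ₗ[ℝ] G, (∀ x : E₀, φ (x : F) = ψ x) ∧
          ∀ x : F, (1 - ε) * ‖x‖ ≤ ‖φ x‖ ∧ ‖φ x‖ ≤ (1 + ε) * ‖x‖

open TopologicalSpace

/-! ### Constructions with seminorms -/

/-- Amalgamation of two seminorms along a map that is only approximately isometric. If `S` and `J`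
map `X` into `V` and `Z` and the two induced seminorms differ by at most `q`, then `V × Z` carries a
seminorm that restricts to the given ones on both factors and for which `S c` and `J c` are at
distance at most `q c`. It is an infimal convolution, the seminorm of a relaxed pushout. -/
theorem exists_amalgam {V Z X : Type*} [AddCommGroup V] [Module ℝ V] [AddCommGroup Z]
    [Module ℝ Z] [AddCommGroup X] [Module ℝ X] (p : Seminorm ℝ V) (N : Seminorm ℝ Z)
    (q : Seminorm ℝ X) (S : X →ₗ[ℝ] V) (J : X →ₗ[ℝ] Z)
    (h : ∀ c, |p (S c) - N (J c)| ≤ q c) :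
    ∃ r : Seminorm ℝ (V × Z), (∀ u, r (u, 0) = p u) ∧ (∀ a, r (0, a) = N a) ∧
      ∀ c, r (S c, -J c) ≤ q c := by
  let g : V × Z → X → ℝ := fun v c => p (v.1 - S c) + N (v.2 + J c) + q c
  have g0 : ∀ v c, 0 ≤ g v c := fun v c => by positivity
  have bdd : ∀ v, BddBelow (Set.range (g v)) := fun v => ⟨0, by rintro _ ⟨c, rfl⟩; exact g0 v c⟩
  have le : ∀ v c, (⨅ c, g v c) ≤ g v c := fun v c => ciInf_le (bdd v) c
  let r : Seminorm ℝ (V × Z) := Seminorm.ofSMulLE (fun v => ⨅ c, g v c)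
    (le_antisymm ((le 0 0).trans (by simp [g])) (Real.iInf_nonneg (g0 0)))
    (fun x y => by
      refine le_ciInf_add_ciInf fun c d => (le _ (c + d)).trans ?_
      have h1 := map_add_le_add p (x.1 - S c) (y.1 - S d)
      have h2 := map_add_le_add N (x.2 + J c) (y.2 + J d)
      have h3 := map_add_le_add q c d
      have e1 : (x + y).1 - S (c + d) = x.1 - S c + (y.1 - S d) := by simp; abel
      have e2 : (x + y).2 + J (c + d) = x.2 + J c + (y.2 + J d) := by simp; abel
      simp only [g, e1, e2]
      linarith)
    (fun t x => by
      rw [Real.mul_iInf_of_nonneg (norm_nonneg t)]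
      refine le_ciInf fun c => (le _ (t • c)).trans (le_of_eq ?_)
      have e1 : (t • x).1 - S (t • c) = t • (x.1 - S c) := by simp [smul_sub]
      have e2 : (t • x).2 + J (t • c) = t • (x.2 + J c) := by simp [smul_add]
      simp only [g, e1, e2, map_smul_eq_mul]
      ring)
  refine ⟨r, fun u => le_antisymm ((le _ 0).trans (by simp [g])) (le_ciInf fun c => ?_),
    fun a => le_antisymm ((le _ 0).trans (by simp [g])) (le_ciInf fun c => ?_),
    fun c => (le _ c).trans (by simp [g])⟩
  · have h1 := map_add_le_add p (u - S c) (S c)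
    have h2 := (abs_le.1 (h c)).2
    simp only [sub_add_cancel] at h1
    simp only [g, zero_add]
    linarith
  · have h1 := map_sub_le_add N (a + J c) (J c)
    have h2 := (abs_le.1 (h c)).1
    have h3 := map_neg_eq_map p (S c)
    simp only [add_sub_cancel_right] at h1
    simp only [g, zero_sub, h3]
    linarith

theorem Seminorm.sum_le {V ι : Type*} [AddCommGroup V] [Module ℝ V] (p : Seminorm ℝ V)
    (s : Finset ι) (v : ι → V) : p (∑ i ∈ s, v i) ≤ ∑ i ∈ s, p (v i) :=
  Finset.le_sum_of_subadditive p (map_zero p).le (map_add_le_add p) s v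

/-- The Hausdorff completion of a vector space with respect to a seminorm. -/
theorem exists_completion {V : Type u} [AddCommGroup V] [Module ℝ V] (p : Seminorm ℝ V) :
    ∃ (G : Type u) (_ : NormedAddCommGroup G) (_ : NormedSpace ℝ G) (_ : CompleteSpace G)
      (i : V →ₗ[ℝ] G), (∀ v, ‖i v‖ = p v) ∧ DenseRange i := by
  let : SeminormedAddCommGroup V := p.toAddGroupSeminorm.toSeminormedAddCommGroup
  let : NormedSpace ℝ V := { norm_smul_le := fun a b => (map_smul_eq_mul p a b).le }
  exact ⟨UniformSpace.Completion V, inferInstance, inferInstance, inferInstance,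
    (UniformSpace.Completion.toComplₗᵢ (𝕜 := ℝ)).toLinearMap,
    fun v => UniformSpace.Completion.norm_coe v, UniformSpace.Completion.denseRange_coe⟩

theorem Seminorm.abs_sub_le_mul_norm {Z : Type*} [NormedAddCommGroup Z] [NormedSpace ℝ Z]
    (p N : Seminorm ℝ Z) (δ : ℝ) (h : ∀ a ∈ Metric.closedBall (0 : Z) 1, |p a - N a| < δ) (a : Z) :
    |p a - N a| ≤ δ * ‖a‖ := by
  rcases eq_or_ne a 0 with rfl | ha
  · simp
  have ha' : 0 < ‖a‖ := norm_pos_iff.2 ha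
  have := (h (‖a‖⁻¹ • a) (by simp [norm_smul, ha'.ne'])).le
  rw [map_smul_eq_mul, map_smul_eq_mul, ← mul_sub, abs_mul, norm_inv, norm_norm,
    abs_of_pos (inv_pos.2 ha'), inv_mul_le_iff₀ ha'] at this
  linarith

/-- The continuous seminorms on a finite-dimensional space are separable for uniform convergence on
the unit ball, because `C(closedBall 0 1, ℝ)` is a separable metric space. -/
theorem exists_seq_seminorm (Z : Type*) [NormedAddCommGroup Z] [NormedSpace ℝ Z]
    [FiniteDimensional ℝ Z] :
    ∃ N : ℕ → Seminorm ℝ Z, (∀ j, Continuous (N j)) ∧ ∀ M : Seminorm ℝ Z, Continuous M →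
      ∀ δ > 0, ∃ j, ∀ a, |N j a - M a| ≤ δ * ‖a‖ := by
  have := FiniteDimensional.proper ℝ Z
  let C := {M : Seminorm ℝ Z // Continuous M}
  let res : C → C(Metric.closedBall (0 : Z) 1, ℝ) := fun M =>
    ⟨fun a => M.1 a, M.2.comp continuous_subtype_val⟩
  have : Nonempty (Set.range res) := ⟨⟨_, ⟨0, by exact continuous_const⟩, rfl⟩⟩
  choose N hN using fun j => (denseSeq (Set.range res) j).2
  refine ⟨fun j => (N j).1, fun j => (N j).2, fun M hM δ hδ => ?_⟩
  obtain ⟨j, hj⟩ := (denseRange_denseSeq (Set.range res)).exists_dist_lt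
    (⟨_, ⟨M, hM⟩, rfl⟩ : Set.range res) hδ
  rw [Subtype.dist_eq, ← hN j, dist_comm, ContinuousMap.dist_lt_iff hδ] at hj
  exact ⟨j, Seminorm.abs_sub_le_mul_norm _ _ _ fun a ha => hj ⟨a, ha⟩⟩

/-! ### The compact space of admissible seminorms -/

/-- The set of all seminorms on `E × (ℕ →₀ ℝ)` that restrict to the norm of `E` on the first factor
and are at most `1` on the standard basis vectors of the second one. They are encoded as plain
functions so that they carry the topology of pointwise convergence; the bound on the basis vectors
makes the set compact. -/
def admissible (E : Type u) [NormedAddCommGroup E] [NormedSpace ℝ E] :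
    Set (E × (ℕ →₀ ℝ) → ℝ) :=
  {f | (∀ x y, f (x + y) ≤ f x + f y) ∧ (∀ (t : ℝ) x, f (t • x) = ‖t‖ * f x) ∧
    (∀ e, f (e, 0) = ‖e‖) ∧ ∀ n, f (0, Finsupp.single n 1) ≤ 1}

section
variable {E : Type u} [NormedAddCommGroup E] [NormedSpace ℝ E]

/-- An admissible function, as a seminorm. -/
noncomputable def admissible.toSeminorm (f : admissible E) : Seminorm ℝ (E × (ℕ →₀ ℝ)) :=
  Seminorm.of (𝕜 := ℝ) (E := E × (ℕ →₀ ℝ)) f.1 f.2.1 f.2.2.1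

theorem admissible.apply (f : admissible E) (v) : toSeminorm f v = f.1 v := rfl

theorem admissible.seminorm_mem (p : Seminorm ℝ (E × (ℕ →₀ ℝ))) (h1 : ∀ e, p (e, 0) = ‖e‖)
    (h2 : ∀ n, p (0, Finsupp.single n 1) ≤ 1) : (p : E × (ℕ →₀ ℝ) → ℝ) ∈ admissible E :=
  ⟨map_add_le_add p, map_smul_eq_mul p, h1, h2⟩

theorem admissible.le (f : admissible E) (v : E × (ℕ →₀ ℝ)) :
    toSeminorm f v ≤ ‖v.1‖ + v.2.sum fun _ a => |a| := by
  have h1 : v = (v.1, 0) + v.2.sum fun n a => a • ((0, Finsupp.single n 1) : E × (ℕ →₀ ℝ)) := by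
    ext1
    · simp [Finsupp.sum, Prod.fst_sum]
    · simp only [Finsupp.sum, Prod.snd_add, Prod.snd_sum, Prod.smul_snd, zero_add]
      conv_lhs => rw [← Finsupp.sum_single v.2]
      simp [Finsupp.sum]
  conv_lhs => rw [h1]
  refine (map_add_le_add _ _ _).trans (add_le_add (f.2.2.2.1 _).le ?_)
  refine (Seminorm.sum_le _ _ _).trans (Finset.sum_le_sum fun n _ => ?_)
  rw [map_smul_eq_mul, Real.norm_eq_abs]
  exact mul_le_of_le_one_right (abs_nonneg _) (f.2.2.2.2 n)

theorem admissible.isCompact : IsCompact (admissible E) := by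
  refine (isCompact_univ_pi fun v : E × (ℕ →₀ ℝ) =>
    isCompact_Icc (a := (0 : ℝ)) (b := ‖v.1‖ + v.2.sum fun _ a => |a|)).of_isClosed_subset ?_ ?_
  · simp only [admissible, Set.ofPred_and, Set.ofPred_forall]
    refine IsClosed.inter ?_ (IsClosed.inter ?_ (IsClosed.inter ?_ ?_))
    · exact isClosed_iInter fun x => isClosed_iInter fun y =>
        isClosed_le (by fun_prop) (by fun_prop)
    · exact isClosed_iInter fun x => isClosed_iInter fun y =>
        isClosed_eq (by fun_prop) (by fun_prop)
    · exact isClosed_iInter fun x => isClosed_eq (by fun_prop) (by fun_prop)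
    · exact isClosed_iInter fun x => isClosed_le (by fun_prop) (by fun_prop)
  · intro f hf v _
    exact ⟨apply_nonneg (admissible.toSeminorm ⟨f, hf⟩) v, admissible.le ⟨f, hf⟩ v⟩

instance : CompactSpace (admissible E) := isCompact_iff_compactSpace.1 admissible.isCompact

instance : Nonempty (admissible E) :=
  ⟨_, admissible.seminorm_mem ((normSeminorm ℝ E).comp (LinearMap.fst ℝ E (ℕ →₀ ℝ)))
    (by simp) (by simp)⟩

theorem admissible.continuous_apply (v : E × (ℕ →₀ ℝ)) :
    Continuous fun f : admissible E => toSeminorm f v :=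
  (_root_.continuous_apply v).comp continuous_subtype_val

/-- Admissible seminorms are equi-Lipschitz along `T`, so evaluation at `T a` is jointly continuous
in the seminorm and in `a`, and compactness of the ball makes the condition open. -/
theorem admissible.isOpen_forall_ball {ι : Type*} [Fintype ι]
    (T : (ι → ℝ) →ₗ[ℝ] E × (ℕ →₀ ℝ)) (N : (ι → ℝ) → ℝ) (hN : Continuous N) (δ : ℝ) :
    IsOpen {f : admissible E |
      ∀ a ∈ Metric.closedBall (0 : ι → ℝ) 1, |toSeminorm f (T a) - N a| < δ} := by
  classical
  have hc : Continuous fun z : admissible E × (ι → ℝ) => toSeminorm z.1 (T z.2) := by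
    rw [continuous_iff_continuousAt]
    rintro ⟨f, a⟩
    let B : ι → ℝ := fun i => ‖(T (Pi.single i 1)).1‖ + (T (Pi.single i 1)).2.sum fun _ a => |a|
    have key : ∀ z : admissible E × (ι → ℝ), |toSeminorm z.1 (T z.2) - toSeminorm f (T a)| ≤
        ∑ i, |z.2 i - a i| * B i + |toSeminorm z.1 (T a) - toSeminorm f (T a)| := by
      intro z
      refine (abs_sub_le _ (toSeminorm z.1 (T a)) _).trans (add_le_add_left ?_ _)
      refine (abs_sub_map_le_sub _ _ _).trans ?_
      rw [← map_sub, pi_eq_sum_univ' (z.2 - a), map_sum]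
      refine (Seminorm.sum_le _ _ _).trans (Finset.sum_le_sum fun i _ => ?_)
      rw [map_smul, map_smul_eq_mul]
      exact mul_le_mul_of_nonneg_left (admissible.le z.1 _) (norm_nonneg _)
    rw [ContinuousAt, tendsto_iff_norm_sub_tendsto_zero]
    refine squeeze_zero (fun _ => norm_nonneg _) key ?_
    have : Continuous fun z : admissible E × (ι → ℝ) =>
      ∑ i, |z.2 i - a i| * B i + |toSeminorm z.1 (T a) - toSeminorm f (T a)| := by
      have := (admissible.continuous_apply (T a)).comp
        (continuous_fst : Continuous fun z : admissible E × (ι → ℝ) => z.1)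
      simp only [Function.comp_def] at this
      fun_prop
    simpa using this.tendsto (f, a)
  rw [isOpen_iff_mem_nhds]
  intro f hf
  refine (isCompact_closedBall (0 : ι → ℝ) 1).eventually_forall_of_forall_eventually
    fun a ha => ?_
  exact (continuous_abs.comp (hc.sub (hN.comp continuous_snd))).continuousAt.eventually_lt
    continuousAt_const (hf a ha)
/-! ### Extension problems -/

/-- The admissible functions `f` that solve the extension problem `(S, J, N, δ)`: if `f ∘ S` and
`N ∘ J` agree up to `δ`, then some linear `T` is almost isometric from `N` to `f` and satisfies
`T ∘ J ≈ S`, with errors below `2 * δ` on the unit balls. Subtracting the constant `0` gives both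
conditions the shape treated in `admissible.isOpen_forall_ball`. -/
def admissible.solved {α ι : Type*} [Fintype α] [Fintype ι]
    (S : (α → ℝ) →ₗ[ℝ] E × (ℕ →₀ ℝ)) (J : (α → ℝ) →ₗ[ℝ] (ι → ℝ)) (N : Seminorm ℝ (ι → ℝ))
    (δ : ℝ) : Set (admissible E) :=
  {f | (∀ c, |toSeminorm f (S c) - N (J c)| ≤ δ * ‖c‖) → ∃ T : (ι → ℝ) →ₗ[ℝ] E × (ℕ →₀ ℝ),
    (∀ c ∈ Metric.closedBall (0 : α → ℝ) 1, |toSeminorm f ((T ∘ₗ J - S) c) - 0| < 2 * δ) ∧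
    ∀ a ∈ Metric.closedBall (0 : ι → ℝ) 1, |toSeminorm f (T a) - N a| < 2 * δ}

section
variable {α ι : Type*} [Fintype α] [Fintype ι]

theorem admissible.isOpen_solved (S : (α → ℝ) →ₗ[ℝ] E × (ℕ →₀ ℝ))
    (J : (α → ℝ) →ₗ[ℝ] (ι → ℝ)) (N : Seminorm ℝ (ι → ℝ)) (hN : Continuous N) (δ : ℝ) :
    IsOpen (solved S J N δ) := by
  have h1 : IsClosed {f : admissible E | ∀ c, |toSeminorm f (S c) - N (J c)| ≤ δ * ‖c‖} := by
    rw [Set.ofPred_forall]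
    exact isClosed_iInter fun c => isClosed_le
      ((admissible.continuous_apply (S c)).sub continuous_const).abs continuous_const
  have h2 := isOpen_iUnion fun T : (ι → ℝ) →ₗ[ℝ] E × (ℕ →₀ ℝ) =>
    (isOpen_forall_ball (T ∘ₗ J - S) (fun _ => 0) continuous_const (2 * δ)).inter
      (isOpen_forall_ball T N hN (2 * δ))
  convert h1.isOpen_compl.union h2 using 1
  ext f
  refine imp_iff_not_or.trans (or_congr Iff.rfl ?_)
  rw [Set.mem_iUnion]
  exact Iff.rfl

/-- An admissible `f` satisfying the hypothesis of an extension problem can be changed into an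
admissible `f'` that solves it, keeping its values on a given finite set `I`. The copy `T` of
`ι → ℝ` is spanned by fresh basis vectors, which no vector of `I` and no value of `S` involves. -/
theorem admissible.exists_extension (f : admissible E) (S : (α → ℝ) →ₗ[ℝ] E × (ℕ →₀ ℝ))
    (J : (α → ℝ) →ₗ[ℝ] (ι → ℝ)) (N : Seminorm ℝ (ι → ℝ)) {δ : ℝ} (hδ : 0 < δ)
    (h : ∀ c, |toSeminorm f (S c) - N (J c)| ≤ δ * ‖c‖) (I : Finset (E × (ℕ →₀ ℝ))) :
    ∃ (f' : admissible E) (T : (ι → ℝ) →ₗ[ℝ] E × (ℕ →₀ ℝ)),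
      (∀ v ∈ I, f'.1 v = f.1 v) ∧ (∀ c, toSeminorm f' (T (J c) - S c) ≤ δ * ‖c‖) ∧
      ∀ a, toSeminorm f' (T a) = N a := by
  classical
  lift δ to NNReal using hδ.le
  let A : Finset ℕ := I.biUnion (fun v => v.2.support) ∪
    Finset.univ.biUnion fun i : α => (S (Pi.single i 1)).2.support
  have : Infinite ((A : Set ℕ)ᶜ : Set ℕ) := A.finite_toSet.infinite_compl.to_subtype
  let g : ι → ℕ := fun i => Infinite.natEmbedding ((A : Set ℕ)ᶜ : Set ℕ) (Fintype.equivFin ι i)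
  have g_inj : Function.Injective g := fun i j hij =>
    (Fintype.equivFin ι).injective (Fin.val_injective
      ((Infinite.natEmbedding ((A : Set ℕ)ᶜ : Set ℕ)).injective (Subtype.val_injective hij)))
  have g_mem : ∀ i, g i ∉ A := fun i => (Infinite.natEmbedding ((A : Set ℕ)ᶜ : Set ℕ) _).2
  -- The scaling factor `M` keeps the new seminorm at most `1` on the fresh basis vectors.
  let M : ℝ := 1 + ∑ i, N (Pi.single i 1)
  have hM : 0 < M := by positivity
  have hNM : ∀ i, N (Pi.single i 1) ≤ M := fun i =>
    (Finset.single_le_sum (f := fun i => N (Pi.single i 1)) (fun _ _ => apply_nonneg _ _)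
      (Finset.mem_univ i)).trans (by simp [M])
  let T : (ι → ℝ) →ₗ[ℝ] E × (ℕ →₀ ℝ) :=
    Fintype.linearCombination ℝ fun i => ((0, Finsupp.single (g i) M) : E × (ℕ →₀ ℝ))
  let R : E × (ℕ →₀ ℝ) →ₗ[ℝ] (ι → ℝ) :=
    LinearMap.pi fun i => M⁻¹ • (Finsupp.lapply (g i) ∘ₗ LinearMap.snd ℝ E (ℕ →₀ ℝ))
  have R_apply : ∀ v i, R v i = M⁻¹ * v.2 (g i) := fun v i => by simp [R]
  have T_single : ∀ i, T (Pi.single i 1) = (0, Finsupp.single (g i) M) := fun i => by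
    simp [T]
  have RT : ∀ a, R (T a) = a := by
    suffices R ∘ₗ T = LinearMap.id from fun a => LinearMap.congr_fun this a
    refine LinearMap.pi_ext' fun i => LinearMap.ext_ring ?_
    ext j
    simp only [LinearMap.comp_apply, LinearMap.single_apply, LinearMap.id_apply, T_single,
      R_apply, Finsupp.single_apply, g_inj.eq_iff, Pi.single_apply, eq_comm (a := j)]
    split_ifs <;> simp [hM.ne']
  have RS : ∀ c, R (S c) = 0 := by
    suffices R ∘ₗ S = 0 from fun a => LinearMap.congr_fun this a
    refine LinearMap.pi_ext' fun i => LinearMap.ext_ring ?_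
    ext j
    have : (S (Pi.single i 1)).2 (g j) = 0 := by
      by_contra hne
      exact g_mem j (Finset.mem_union_right _ (Finset.mem_biUnion.2
        ⟨i, Finset.mem_univ _, Finsupp.mem_support_iff.2 hne⟩))
    simp [R_apply, this]
  have RI : ∀ v ∈ I, R v = 0 := by
    intro v hv
    ext j
    have : v.2 (g j) = 0 := by
      by_contra hne
      exact g_mem j (Finset.mem_union_left _ (Finset.mem_biUnion.2
        ⟨v, hv, Finsupp.mem_support_iff.2 hne⟩))
    simp [R_apply, this]
  obtain ⟨r, hr1, hr2, hr3⟩ := exists_amalgam (toSeminorm f) N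
    (δ • normSeminorm ℝ (α → ℝ)) S J h
  -- The fresh coordinates of `v` go to the second factor of the amalgam, the rest to the first.
  let p : Seminorm ℝ (E × (ℕ →₀ ℝ)) := r.comp ((LinearMap.id - T ∘ₗ R).prod R)
  have hp : ∀ v, p v = r (v - T (R v), R v) := fun v => rfl
  have hp0 : ∀ v, R v = 0 → p v = toSeminorm f v := fun v hv => by
    rw [hp, hv, map_zero, sub_zero, hr1]
  have hpT : ∀ a, p (T a) = N a := fun a => by rw [hp, RT, sub_self, hr2]
  refine ⟨⟨p, seminorm_mem p ?_ ?_⟩, T, ?_, ?_, ?_⟩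
  · intro e
    rw [hp0 _ (by ext i; simp [R_apply])]
    exact f.2.2.2.1 e
  · intro n
    by_cases hn : ∃ i, g i = n
    · obtain ⟨i, rfl⟩ := hn
      have : ((0, Finsupp.single (g i) 1) : E × (ℕ →₀ ℝ)) = T (M⁻¹ • Pi.single i 1) := by
        rw [map_smul, T_single]
        simp [hM.ne']
      rw [this, hpT, map_smul_eq_mul, norm_inv, Real.norm_of_nonneg hM.le, inv_mul_le_one₀ hM]
      exact hNM i
    · push Not at hn
      rw [hp0 _ (by ext i; simp [R_apply, hn i])]
      exact f.2.2.2.2 n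
  · exact fun v hv => hp0 v (RI v hv)
  · intro c
    refine le_trans (le_of_eq ?_) (hr3 c)
    change p _ = _
    rw [← map_neg_eq_map r, hp, map_sub, RT, RS, sub_zero]
    simp
  · exact hpT

theorem admissible.dense_solved (S : (α → ℝ) →ₗ[ℝ] E × (ℕ →₀ ℝ))
    (J : (α → ℝ) →ₗ[ℝ] (ι → ℝ)) (N : Seminorm ℝ (ι → ℝ)) {δ : ℝ} (hδ : 0 < δ) :
    Dense (solved S J N δ) := by
  rw [dense_iff_inter_open]
  rintro _ ⟨U, hU, rfl⟩ ⟨f, hf⟩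
  by_cases h : ∀ c, |toSeminorm f (S c) - N (J c)| ≤ δ * ‖c‖
  swap
  · exact ⟨f, hf, fun h' => absurd h' h⟩
  obtain ⟨I, u, hu, hIU⟩ := isOpen_pi_iff.1 hU f.1 hf
  obtain ⟨f', T, h1, h2, h3⟩ := exists_extension f S J N hδ h I
  refine ⟨f', hIU fun v hv => by rw [h1 v hv]; exact (hu v hv).2, fun _ => ⟨T, ?_, ?_⟩⟩
  · intro c hc
    rw [mem_closedBall_zero_iff] at hc
    rw [sub_zero, abs_of_nonneg (apply_nonneg _ _)]
    have : δ * ‖c‖ ≤ δ * 1 := by gcongr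
    exact (h2 c).trans_lt (by linarith)
  · intro a _
    rw [h3 a, sub_self, abs_zero]
    positivity
end

/-- A countable family of vectors of `E × (ℕ →₀ ℝ)`, dense for every admissible seminorm: the first
coordinate runs through a dense sequence of `E`, the second one has rational entries. -/
noncomputable def admissible.net [SeparableSpace E] (d : ℕ × (ℕ →₀ ℚ)) : E × (ℕ →₀ ℝ) :=
  (denseSeq E d.1, d.2.mapRange (fun q : ℚ => (q : ℝ)) Rat.cast_zero)

theorem admissible.exists_approx [SeparableSpace E] (f : admissible E) (v : E × (ℕ →₀ ℝ))
    {η : ℝ} (hη : 0 < η) : ∃ d : ℕ × (ℕ →₀ ℚ), toSeminorm f (v - net d) < η := by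
  have h1 : ∀ (x : ℕ →₀ ℝ) (η : ℝ), 0 < η → ∃ y : ℕ →₀ ℚ,
      toSeminorm f (0, x - y.mapRange (fun q : ℚ => (q : ℝ)) Rat.cast_zero) < η := by
    intro x
    induction x using Finsupp.induction_linear with
    | zero => exact fun η hη => ⟨0, by simpa [← Prod.zero_eq_mk] using hη⟩
    | add x x' hx hx' =>
      intro η hη
      obtain ⟨y, hy⟩ := hx (η / 2) (by positivity)
      obtain ⟨y', hy'⟩ := hx' (η / 2) (by positivity)
      refine ⟨y + y', ?_⟩
      have := map_add_le_add (toSeminorm f)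
        (0, x - y.mapRange (fun q : ℚ => (q : ℝ)) Rat.cast_zero)
        (0, x' - y'.mapRange (fun q : ℚ => (q : ℝ)) Rat.cast_zero)
      rw [Prod.mk_add_mk, add_zero, sub_add_sub_comm,
        ← Finsupp.mapRange_add (fun a b => Rat.cast_add a b)] at this
      linarith
    | single n t =>
      intro η hη
      obtain ⟨q, hq1, hq2⟩ := exists_rat_btwn (show t < t + η by linarith)
      refine ⟨Finsupp.single n q, ?_⟩
      have e : ((0, Finsupp.single n t - Finsupp.single n (q : ℝ)) : E × (ℕ →₀ ℝ)) =
          (t - q) • (0, Finsupp.single n 1) := by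
        simp [← Finsupp.single_sub]
      rw [Finsupp.mapRange_single, e, map_smul_eq_mul, Real.norm_eq_abs, abs_sub_comm,
        abs_of_pos (by linarith)]
      have := mul_le_of_le_one_right (show (0 : ℝ) ≤ q - t by linarith) (f.2.2.2.2 n)
      rw [← apply] at this
      linarith
  obtain ⟨n, hn⟩ := (denseRange_denseSeq E).exists_dist_lt v.1 (half_pos hη)
  obtain ⟨y, hy⟩ := h1 v.2 (η / 2) (by positivity)
  refine ⟨(n, y), ?_⟩
  have := map_add_le_add (toSeminorm f) (v.1 - denseSeq E n, 0)
    (0, v.2 - y.mapRange (fun q : ℚ => (q : ℝ)) Rat.cast_zero)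
  rw [Prod.mk_add_mk, add_zero, zero_add, apply f (v.1 - denseSeq E n, 0), f.2.2.2.1,
    ← dist_eq_norm] at this
  exact lt_of_le_of_lt this (by linarith)

/-- The inclusion of the first summand of coordinates, with zeros in the second summand. -/
def inlCoord (α β : Type*) : (α → ℝ) →ₗ[ℝ] (α ⊕ β → ℝ) where
  toFun c := Sum.elim c 0
  map_add' c d := by ext (i | i) <;> simp
  map_smul' t c := by ext (i | i) <;> simp

/-- An admissible function is generic if it solves all the extension problems with net vectors as
images of the basis of the first factor, tolerances `1 / (n + 1)` and seminorms `N'` from a family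
that is dense among all continuous seminorms. The family itself is left implicit. -/
def admissible.IsGeneric [SeparableSpace E] (f : admissible E) : Prop :=
  ∀ (k l : ℕ) (N : Seminorm ℝ (Fin k ⊕ Fin l → ℝ)), Continuous N →
    ∀ δ > 0, ∃ N' : Seminorm ℝ (Fin k ⊕ Fin l → ℝ), (∀ a, |N' a - N a| ≤ δ * ‖a‖) ∧
      ∀ (d : Fin k → ℕ × (ℕ →₀ ℚ)) (n : ℕ),
        f ∈ solved (Fintype.linearCombination ℝ fun i => net (d i)) (inlCoord _ _) N'
          (1 / (n + 1))

/-- Generic admissible functions exist: they form a countable intersection of dense open subsets of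
a nonempty compact Hausdorff space. -/
theorem admissible.exists_generic (E : Type u) [NormedAddCommGroup E] [NormedSpace ℝ E]
    [SeparableSpace E] :
    ∃ f : admissible E, IsGeneric f := by
  choose N hN hN' using fun k l : ℕ => exists_seq_seminorm (Fin k ⊕ Fin l → ℝ)
  have := dense_iInter_of_isOpen (X := admissible E)
    (ι := (k : ℕ) × ℕ × ℕ × ℕ × (Fin k → ℕ × (ℕ →₀ ℚ)))
    (f := fun t => solved (Fintype.linearCombination ℝ fun i => net (t.2.2.2.2 i))
      (inlCoord _ _) (N t.1 t.2.1 t.2.2.1) (1 / (t.2.2.2.1 + 1)))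
    (fun t => isOpen_solved _ _ _ (hN _ _ _) _) (fun t => dense_solved _ _ _ (by positivity))
  obtain ⟨f, hf⟩ := this.nonempty
  refine ⟨f, fun k l M hM δ hδ => ?_⟩
  obtain ⟨j, hj⟩ := hN' k l M hM δ hδ
  exact ⟨N k l j, hj, fun d n => Set.mem_iInter.1 hf ⟨k, l, j, n, d⟩⟩
end

/-! ### The Gurarij property of a generic completion -/

/-- Coordinates on `F` for which `E₀` is the first block of coordinates. -/
theorem exists_adapted_basis {F : Type*} [NormedAddCommGroup F] [NormedSpace ℝ F]
    [FiniteDimensional ℝ F] (E₀ : Submodule ℝ F) :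
    ∃ (k l : ℕ) (L : (Fin k ⊕ Fin l → ℝ) ≃ₗ[ℝ] F) (L₀ : (Fin k → ℝ) ≃ₗ[ℝ] E₀),
      ∀ c, L (inlCoord _ _ c) = L₀ c := by
  obtain ⟨E₁, h⟩ := E₀.exists_isCompl
  let b₀ := Module.finBasis ℝ E₀
  let b₁ := Module.finBasis ℝ E₁
  refine ⟨_, _, ((b₀.prod b₁).map (E₀.prodEquivOfIsCompl E₁ h)).equivFun.symm,
    b₀.equivFun.symm, fun c => ?_⟩
  simp [Module.Basis.equivFun_symm_apply, inlCoord]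

theorem norm_inlCoord {α β : Type*} [Fintype α] [Fintype β] (c : α → ℝ) :
    ‖inlCoord α β c‖ = ‖c‖ := by
  apply le_antisymm
  · refine (pi_norm_le_iff_of_nonneg (norm_nonneg c)).2 ?_
    rintro (i | i)
    · exact norm_le_pi_norm c i
    · simp [inlCoord]
  · exact (pi_norm_le_iff_of_nonneg (norm_nonneg _)).2 fun i =>
      norm_le_pi_norm (inlCoord α β c) (Sum.inl i)

/-- Given `ψ : E₀ → G`, approximate it by a map `S` into net vectors and the norm of `F` by a member
of the dense family, solve the corresponding extension problem by `T`, and correct `T` by the small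
operator `D`, so that it extends `ψ` exactly. -/
theorem gurarijProperty_of_generic {E : Type u} [NormedAddCommGroup E] [NormedSpace ℝ E]
    [SeparableSpace E] (f : admissible E)
    (hf : admissible.IsGeneric f)
    {G : Type u} [NormedAddCommGroup G] [NormedSpace ℝ G] (i : E × (ℕ →₀ ℝ) →ₗ[ℝ] G)
    (hi : ∀ v, ‖i v‖ = admissible.toSeminorm f v) (hd : DenseRange i) : GurarijProperty G := by
  classical
  intro ε hε F _ _ _ E₀ ψ
  obtain ⟨k, l, L, L₀, hL⟩ := exists_adapted_basis E₀
  obtain ⟨C, hC, hLC⟩ : ∃ C : ℝ, 0 < C ∧ ∀ x, ‖L.symm x‖ ≤ C * ‖x‖ :=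
    (L.symm.toContinuousLinearEquiv : F →L[ℝ] (Fin k ⊕ Fin l → ℝ)).bound
  -- The final error is at most `6 * δ * ‖a‖`: `3 * δ` from the correction `D`, `2 * δ` from `T`
  -- and `δ / 2` from the approximation of the norm of `F`; here `‖a‖ ≤ C * ‖L a‖`.
  obtain ⟨n, hn⟩ := exists_nat_one_div_lt (show 0 < ε / (8 * C) by positivity)
  set δ : ℝ := 1 / (n + 1)
  have hδ0 : 0 < δ := by positivity
  obtain ⟨N, hN, hsol⟩ := hf k l ((normSeminorm ℝ F).comp L.toLinearMap)
    (continuous_norm.comp L.toContinuousLinearEquiv.continuous) (δ / 2) (by positivity)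
  replace hN : ∀ a, |N a - ‖L a‖| ≤ δ / 2 * ‖a‖ := hN
  have hnet : ∀ j : Fin k, ∃ d, ‖i (admissible.net d) - ψ (L₀ (Pi.single j 1))‖ ≤
      δ / (2 * (k + 1)) := by
    intro j
    have hη : 0 < δ / (2 * (k + 1)) / 2 := by positivity
    obtain ⟨v, hv⟩ := hd.exists_dist_lt (ψ (L₀ (Pi.single j 1))) hη
    obtain ⟨d, hd⟩ := admissible.exists_approx f v hη
    refine ⟨d, ?_⟩
    rw [← hi, map_sub, ← dist_eq_norm] at hd
    rw [← dist_eq_norm, dist_comm]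
    linarith [dist_triangle (ψ (L₀ (Pi.single j 1))) (i v) (i (admissible.net d))]
  choose d hd' using hnet
  let S : (Fin k → ℝ) →ₗ[ℝ] E × (ℕ →₀ ℝ) :=
    Fintype.linearCombination ℝ fun j => admissible.net (d j)
  have hS' : ∀ c, ‖i (S c) - ψ (L₀ c)‖ ≤ δ / 2 * ‖c‖ := by
    intro c
    have e : i (S c) - ψ (L₀ c) =
        ∑ j, c j • (i (admissible.net (d j)) - ψ (L₀ (Pi.single j 1))) := by
      conv_lhs => rw [pi_eq_sum_univ' c]
      simp [S, smul_sub, Fintype.linearCombination_apply]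
    rw [e]
    calc _ ≤ ∑ j : Fin k, ‖c‖ * (δ / (2 * (k + 1))) := norm_sum_le_of_le _ fun j _ => by
          rw [norm_smul]
          exact mul_le_mul (norm_le_pi_norm c j) (hd' j) (norm_nonneg _) (norm_nonneg _)
      _ = (k / (k + 1)) * (δ / 2 * ‖c‖) := by
          rw [Finset.sum_const, Finset.card_univ, Fintype.card_fin, nsmul_eq_mul]
          field_simp
      _ ≤ 1 * (δ / 2 * ‖c‖) := by
          gcongr
          rw [div_le_one (by positivity)]
          linarith
      _ = _ := one_mul _
  have hyp : ∀ c, |admissible.toSeminorm f (S c) - N (inlCoord _ _ c)| ≤ δ * ‖c‖ := by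
    intro c
    have h1 := (abs_norm_sub_norm_le (i (S c)) (ψ (L₀ c))).trans (hS' c)
    have h2 := hN (inlCoord _ _ c)
    rw [norm_inlCoord, hL, ← Submodule.coe_norm, ← ψ.norm_map] at h2
    rw [hi] at h1
    rw [abs_le] at *
    constructor <;> linarith
  obtain ⟨T, hT1, hT2⟩ := hsol d n hyp
  replace hT1 : ∀ c, ‖i (T (inlCoord _ _ c)) - i (S c)‖ ≤ 2 * δ * ‖c‖ := fun c => by
    have := Seminorm.abs_sub_le_mul_norm ((admissible.toSeminorm f).comp (T ∘ₗ inlCoord _ _ - S))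
      0 (2 * δ) hT1 c
    rw [← map_sub, hi]
    exact (le_abs_self _).trans (by simpa using this)
  replace hT2 : ∀ a, |‖i (T a)‖ - N a| ≤ 2 * δ * ‖a‖ := fun a => by
    rw [hi]
    exact Seminorm.abs_sub_le_mul_norm ((admissible.toSeminorm f).comp T) N (2 * δ) hT2 a
  let res : (Fin k ⊕ Fin l → ℝ) →ₗ[ℝ] (Fin k → ℝ) := LinearMap.funLeft ℝ ℝ Sum.inl
  have res_inl : ∀ c, res (inlCoord _ _ c) = c := fun c => rfl
  have res_le : ∀ a, ‖res a‖ ≤ ‖a‖ := fun a =>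
    (pi_norm_le_iff_of_nonneg (norm_nonneg a)).2 fun j => norm_le_pi_norm a (Sum.inl j)
  let D : (Fin k → ℝ) →ₗ[ℝ] G := ψ.toLinearMap ∘ₗ L₀.toLinearMap - i ∘ₗ T ∘ₗ inlCoord _ _
  have hD : ∀ c, ‖D c‖ ≤ 3 * δ * ‖c‖ := fun c => by
    have h1 := norm_sub_le_norm_sub_add_norm_sub (i (T (inlCoord _ _ c))) (i (S c)) (ψ (L₀ c))
    have h2 : ‖D c‖ = ‖i (T (inlCoord _ _ c)) - ψ (L₀ c)‖ := norm_sub_rev _ _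
    have h3 : 0 ≤ δ * ‖c‖ := by positivity
    linarith [hS' c, hT1 c]
  refine ⟨(i ∘ₗ T + D ∘ₗ res) ∘ₗ L.symm.toLinearMap, fun x => ?_, fun x => ?_⟩
  · obtain ⟨c, rfl⟩ := L₀.surjective x
    simp [← hL, res_inl, D]
  · obtain ⟨a, rfl⟩ := L.surjective x
    have e : ((i ∘ₗ T + D ∘ₗ res) ∘ₗ L.symm.toLinearMap) (L a) = i (T a) + D (res a) := by simp
    rw [e]
    have h1 := (hD (res a)).trans (mul_le_mul_of_nonneg_left (res_le a) (by positivity))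
    have h2 := abs_le.1 (hT2 a)
    have h3 := abs_le.1 (hN a)
    have h4 := norm_add_le (i (T a)) (D (res a))
    have h5 := norm_sub_le (i (T a) + D (res a)) (D (res a))
    rw [add_sub_cancel_right] at h5
    have h6 := hLC (L a)
    rw [L.symm_apply_apply] at h6
    have h7 : 6 * δ * ‖a‖ ≤ ε * ‖L a‖ := by
      rw [lt_div_iff₀ (by positivity)] at hn
      calc 6 * δ * ‖a‖ ≤ 6 * δ * (C * ‖L a‖) := by gcongr
        _ = (6 * (δ * C)) * ‖L a‖ := by ring
        _ ≤ ε * ‖L a‖ := by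
          gcongr
          nlinarith [mul_pos hδ0 hC]
    have h8 : 0 ≤ δ * ‖a‖ := by positivity
    constructor <;> linarith

/-- Every separable real Banach space embeds linearly isometrically into a separable real
Banach space with the Gurarij property.  In particular, a Gurarij space exists. -/
theorem exists_gurarij_extension (E : Type u) [NormedAddCommGroup E] [NormedSpace ℝ E]
    [CompleteSpace E] [TopologicalSpace.SeparableSpace E] :
    ∃ (G : Type u) (_ : NormedAddCommGroup G) (_ : NormedSpace ℝ G) (_ : CompleteSpace G),
      TopologicalSpace.SeparableSpace G ∧ GurarijProperty G ∧ Nonempty (E →ₗᵢ[ℝ] G) := by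
  obtain ⟨f, hf⟩ := admissible.exists_generic E
  obtain ⟨G, _, _, _, i, hi, hd⟩ := exists_completion (V := E × (ℕ →₀ ℝ)) (admissible.toSeminorm f)
  refine ⟨G, inferInstance, inferInstance, inferInstance, ?_,
    gurarijProperty_of_generic f hf i hi hd,
    ⟨⟨i ∘ₗ LinearMap.inl ℝ E (ℕ →₀ ℝ), fun e => (hi _).trans (f.2.2.2.1 e)⟩⟩⟩
  have : DenseRange fun d => i (admissible.net d) := Metric.dense_iff.2 fun x r hr => by
    obtain ⟨v, hv⟩ := hd.exists_dist_lt x (half_pos hr)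
    obtain ⟨d, hd⟩ := admissible.exists_approx f v (half_pos hr)
    rw [← hi, map_sub, ← dist_eq_norm] at hd
    refine ⟨_, ?_, d, rfl⟩
    rw [Metric.mem_ball, dist_comm]
    linarith [dist_triangle x (i v) (i (admissible.net d))]
  exact ⟨⟨_, Set.countable_range _, this⟩⟩
end

section
/- For every separable real Banach space E there exist a separable real Banach space G with the Gurarij property, a linear isometric embedding j : E → G, and a group homomorphism Θ from the group of surjective linear isometries of E to the group of surjective linear isometries of G such that Θ is continuous for the topologies of pointwise convergence and (Θφ)(j(a)) = j(φ(a)) for every surjective linear isometry φ of E and every a ∈ E. -/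
/-!
The space `G` is built by a functorial construction, so that isometries extend automatically.

For a normed space `X` let `DualBall X` be the weak-* compact unit ball of its dual. Evaluation
embeds `X` isometrically into `C(DualBall X, ℝ)`, which is separable if `X` is, and every surjective
isometry of `X` acts on `C(DualBall X, ℝ)` by precomposition with its transpose. Iterating this from
`E` gives a chain of separable spaces with compatible actions of the isometry group of `E`; `G` is
the completion of its direct limit. The action stays pointwise continuous at each stage because it is
jointly continuous on the compact dual balls, and it stays so in the completed limit because it is
isometric (`IsoSpace.next`, `limSpace`, `IsoSpace.completion`).

The Gurarij property comes from the fact that `C(DualBall X, ℝ)` contains all one-point extensions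
of `X`: if `ψ : E₀ → X` is an isometric embedding of a finite-dimensional subspace of `F` and
`v : F`, then the function `w g = inf_x (g (ψ x) + ‖v - x‖)` on the dual ball satisfies
`‖w - ψ x‖ = ‖v - x‖` for all `x : E₀`, at least up to a factor close to `1` if the infimum is
restricted to a large ball to ensure continuity (`exists_one_point_continuousMap`). The upper
estimate is a computation with the triangle inequality; the lower one uses, via the Hahn-Banach
theorem, a functional in the dual ball that norms `v - x`. An embedding into `G` itself need not take
values in a stage of the chain, but up to a small perturbation it does (`Saturated.exists_approx`).
Since the one-point extension is proved for maps which distort norms by factors between `a` and `b`,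
it can be repeated for finitely many vectors spanning `F`, at the cost of a distortion that is as
small as desired (`Saturated.exists_extend`).
-/

universe u

/-- The topology of pointwise convergence on the group of surjective linear isometries of
a normed space. -/
def linIsoPtTop (E : Type*) [NormedAddCommGroup E] [NormedSpace ℝ E] :
    TopologicalSpace (E ≃ₗᵢ[ℝ] E) :=
  TopologicalSpace.induced (fun φ : E ≃ₗᵢ[ℝ] E => (φ : E → E)) inferInstance

universe v
open Set Topology Metric

noncomputable section

namespace GurarijExt

/-! ### The dual ball and one-point extensions -/

section DualBall

variable (X : Type u) [NormedAddCommGroup X] [NormedSpace ℝ X]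

/-- The closed unit ball of the dual of `X`, with the weak-* topology; it is compact. -/
abbrev DualBall : Type u :=
  ↥(WeakDual.toStrongDual ⁻¹' closedBall (0 : StrongDual ℝ X) 1 : Set (WeakDual ℝ X))

variable {X}

/-- A functional of norm at most `1`, as a point of the dual ball. -/
def DualBall.mk (g : StrongDual ℝ X) (hg : ‖g‖ ≤ 1) : DualBall X :=
  ⟨StrongDual.toWeakDual g, by simpa using hg⟩

@[simp] lemma DualBall.mk_apply (g : StrongDual ℝ X) (hg : ‖g‖ ≤ 1) (x : X) :
    (DualBall.mk g hg).1 x = g x := rfl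

lemma DualBall.abs_apply_le (g : DualBall X) (x : X) : |g.1 x| ≤ ‖x‖ := by
  have h : ‖WeakDual.toStrongDual g.1‖ ≤ 1 := mem_closedBall_zero_iff.1 g.2
  have := (WeakDual.toStrongDual g.1).le_of_opNorm_le h x
  simpa using this

instance : CompactSpace (DualBall X) :=
  isCompact_iff_compactSpace.1 (WeakDual.isCompact_closedBall (𝕜 := ℝ) 0 1)

/-- This is what makes `C(DualBall X, ℝ)` separable when `X` is. -/
instance [TopologicalSpace.SeparableSpace X] : SecondCountableTopology (DualBall X) := by
  have := WeakDual.metrizable_of_isCompact ℝ X _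
    (WeakDual.isCompact_closedBall (𝕜 := ℝ) (E := X) 0 1)
  let := TopologicalSpace.metrizableSpaceMetric (DualBall X)
  infer_instance

/-- Evaluation is jointly continuous for the weak-* topology on the ball, since the functionals in
the ball are equi-Lipschitz. -/
lemma DualBall.continuous_eval : Continuous fun p : DualBall X × X => p.1.1 p.2 := by
  rw [continuous_iff_continuousAt]
  rintro ⟨g₀, x₀⟩
  rw [ContinuousAt, tendsto_iff_dist_tendsto_zero]
  have h1 : Continuous fun p : DualBall X × X => ‖p.2 - x₀‖ + |p.1.1 x₀ - g₀.1 x₀| := by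
    have : Continuous fun p : DualBall X × X => p.1.1 x₀ :=
      (WeakDual.eval_continuous x₀).comp (continuous_subtype_val.comp continuous_fst)
    fun_prop
  have h2 := h1.tendsto (g₀, x₀)
  simp only [sub_self, norm_zero, abs_zero, add_zero] at h2
  refine squeeze_zero (fun _ => dist_nonneg) (fun p => ?_) h2
  have h3 := p.1.abs_apply_le (p.2 - x₀)
  rw [Real.dist_eq]
  calc |p.1.1 p.2 - g₀.1 x₀| = |p.1.1 (p.2 - x₀) + (p.1.1 x₀ - g₀.1 x₀)| := by
        rw [map_sub]; congr 1; ring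
    _ ≤ _ := (abs_add_le _ _).trans (by gcongr)

variable (X) in
/-- The evaluation embedding `x ↦ (g ↦ g x)`, isometric by the Hahn-Banach theorem. -/
def evalMap : X →ₗᵢ[ℝ] C(DualBall X, ℝ) where
  toFun x := ⟨fun g => g.1 x, (WeakDual.eval_continuous x).comp continuous_subtype_val⟩
  map_add' x y := by ext g; simp
  map_smul' c x := by ext g; simp
  norm_map' x := by
    apply le_antisymm
    · exact (ContinuousMap.norm_le _ (norm_nonneg _)).2 fun g => g.abs_apply_le x
    · obtain ⟨g, hg, hx⟩ := exists_dual_vector'' ℝ x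
      refine le_trans ?_ (ContinuousMap.norm_coe_le_norm _ (DualBall.mk g hg))
      simp [hx]

@[simp] lemma evalMap_apply (x : X) (g : DualBall X) : evalMap X x g = g.1 x := rfl

/-- If `ψ` satisfies `a * ‖x‖ ≤ ‖ψ x‖`, then `a` times any functional `h` of norm at most
`1` transports along `ψ` to a functional of norm at most `1` on the range of `ψ`, which extends to
`X` by the Hahn-Banach theorem. -/
lemma exists_dualBall_eq {F : Type v} [NormedAddCommGroup F] [NormedSpace ℝ F]
    (E₀ : Submodule ℝ F) (ψ : E₀ →ₗ[ℝ] X) {a : ℝ} (ha : 0 < a) (hψ : ∀ x, a * ‖x‖ ≤ ‖ψ x‖)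
    (h : StrongDual ℝ F) (hh : ‖h‖ ≤ 1) :
    ∃ g : DualBall X, ∀ x : E₀, g.1 (ψ x) = a * h x := by
  have hinj : Function.Injective ψ := by
    rw [injective_iff_map_eq_zero]
    intro x hx
    have := hψ x
    rw [hx, norm_zero] at this
    exact norm_le_zero_iff.1 (nonpos_of_mul_nonpos_right this ha)
  let e := LinearEquiv.ofInjective ψ hinj
  let u : LinearMap.range ψ →ₗ[ℝ] ℝ :=
    a • ((h : F →ₗ[ℝ] ℝ) ∘ₗ E₀.subtype ∘ₗ (e.symm : LinearMap.range ψ →ₗ[ℝ] E₀))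
  have hu : ∀ y, ‖u y‖ ≤ 1 * ‖y‖ := by
    intro y
    obtain ⟨x, rfl⟩ := e.surjective y
    have h1 : ‖h x‖ ≤ 1 * ‖(x : F)‖ := h.le_of_opNorm_le hh _
    have h2 : ‖e x‖ = ‖ψ x‖ := rfl
    have h3 : u (e x) = a * h x := by simp [u]
    rw [h2, h3, norm_mul, Real.norm_of_nonneg ha.le, one_mul]
    refine le_trans ?_ (hψ x)
    rw [one_mul] at h1
    gcongr
    exact h1
  obtain ⟨g, hg, hgn⟩ := exists_extension_norm_eq _ (u.mkContinuous 1 hu)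
  refine ⟨DualBall.mk g (hgn ▸ LinearMap.mkContinuous_norm_le _ zero_le_one _), fun x => ?_⟩
  have := hg (e x)
  rw [DualBall.mk_apply]
  change g (ψ x) = _ at this
  rw [this]
  simp [u]

/-- One-point extension into a function space. The infimum over all `x : E₀` of
`g (ψ x) + b * ‖v - x‖`, as a function of `g`, is the natural image of `v`; to have a continuous
function of `g`, the infimum is taken over the compact ball of radius `R` of `E₀` only. The radius
is chosen so that for `x` outside this ball the upper estimate still holds, with `b'` in place
of `b`. -/
lemma exists_one_point_continuousMap {F : Type v} [NormedAddCommGroup F] [NormedSpace ℝ F]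
    (E₀ : Submodule ℝ F) [FiniteDimensional ℝ E₀] (ψ : E₀ →ₗ[ℝ] X) {a b b' : ℝ} (ha : 0 < a)
    (hab : a ≤ b) (hb' : b < b')
    (hψ : ∀ x, a * ‖x‖ ≤ ‖ψ x‖ ∧ ‖ψ x‖ ≤ b * ‖x‖) (v : F) :
    ∃ w : C(DualBall X, ℝ), ∀ x : E₀,
      a * ‖v - x‖ ≤ ‖w - evalMap X (ψ x)‖ ∧ ‖w - evalMap X (ψ x)‖ ≤ b' * ‖v - x‖ := by
  have : ProperSpace E₀ := FiniteDimensional.proper ℝ E₀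
  set R : ℝ := ‖v‖ + 2 * b * ‖v‖ / (b' - b) with hR
  have hb : 0 < b := ha.trans_le hab
  have hbb : 0 < b' - b := sub_pos.2 hb'
  have hR0 : 0 ≤ R := by positivity
  let K : Set E₀ := closedBall 0 R
  have hK : IsCompact K := isCompact_closedBall 0 R
  have h0K : (0 : E₀) ∈ K := by simpa [K] using hR0
  let f : DualBall X → E₀ → ℝ := fun g x => g.1 (ψ x) + b * ‖v - x‖
  have hψc : Continuous ψ := ψ.continuous_of_finiteDimensional
  have hf : Continuous (Function.uncurry f) := by
    have h1 : Continuous fun p : DualBall X × E₀ => p.1.1 (ψ p.2) :=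
      DualBall.continuous_eval.comp (continuous_fst.prodMk (hψc.comp continuous_snd))
    change Continuous fun p : DualBall X × E₀ => p.1.1 (ψ p.2) + b * ‖v - p.2‖
    fun_prop
  let w : C(DualBall X, ℝ) := ⟨fun g => sInf (f g '' K), hK.continuous_sInf hf⟩
  have w_le : ∀ g, ∀ x ∈ K, w g ≤ f g x := fun g x hx =>
    csInf_le (hK.image (hf.comp (Continuous.prodMk_right g))).bddBelow (mem_image_of_mem _ hx)
  have le_w : ∀ g c, (∀ x ∈ K, c ≤ f g x) → c ≤ w g := fun g c hc =>
    le_csInf ⟨_, mem_image_of_mem _ h0K⟩ (by rintro _ ⟨x, hx, rfl⟩; exact hc x hx)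
  -- this bound holds for every `x`, also outside `K`
  have key : ∀ g, ∀ x : E₀, g.1 (ψ x) - b * ‖v - x‖ ≤ w g := by
    intro g x
    refine le_w g _ fun y _ => ?_
    have h1 := (abs_le.1 ((g.abs_apply_le (ψ (x - y))).trans (hψ (x - y)).2)).2
    rw [map_sub, map_sub] at h1
    have h2 : ‖x - y‖ ≤ ‖v - x‖ + ‖v - y‖ := by
      have : ((x - y : E₀) : F) = (v - y) - (v - x) := by push_cast; abel
      rw [Submodule.coe_norm, this, add_comm]
      exact norm_sub_le _ _
    have h3 := mul_le_mul_of_nonneg_left h2 hb.le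
    simp only [f]
    linarith
  refine ⟨w, fun x => ⟨?_, ?_⟩⟩
  · -- the lower estimate is witnessed at the functional `g` that extends `a` times a functional
    -- norming `v - x`
    obtain ⟨h, hh, hhx⟩ := exists_dual_vector'' ℝ (v - (x : F))
    obtain ⟨g, hg⟩ := exists_dualBall_eq E₀ ψ ha (fun x => (hψ x).1) h hh
    have h1 : a * h v ≤ w g := by
      refine le_w g _ fun y _ => ?_
      simp only [f, hg]
      have h2 : h (v - (y : F)) ≤ ‖v - (y : F)‖ := by
        have := h.le_of_opNorm_le hh (v - (y : F))
        rw [one_mul] at this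
        exact (le_abs_self _).trans this
      rw [map_sub] at h2
      have h3 := mul_le_mul_of_nonneg_left h2 ha.le
      have h4 := mul_le_mul_of_nonneg_right hab (norm_nonneg (v - (y : F)))
      linarith
    refine le_trans ?_ (ContinuousMap.norm_coe_le_norm _ g)
    refine le_trans ?_ (le_abs_self _)
    have : h v - h x = ‖v - (x : F)‖ := by rw [← map_sub]; exact hhx
    simp only [ContinuousMap.sub_apply, evalMap_apply, hg]
    rw [← this]
    linarith
  · refine (ContinuousMap.norm_le _ (mul_nonneg (hb.trans hb').le (norm_nonneg _))).2 fun g => ?_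
    rw [Real.norm_eq_abs, abs_le]
    simp only [ContinuousMap.sub_apply, evalMap_apply]
    have hmono : b * ‖v - x‖ ≤ b' * ‖v - x‖ := by gcongr
    refine ⟨by linarith [key g x], ?_⟩
    by_cases hx : x ∈ K
    · have := w_le g x hx
      simp only [f] at this
      linarith
    · have hx' : R < ‖(x : F)‖ := by simpa [K] using hx
      have h1 : w g ≤ b * ‖v‖ := by simpa [f] using w_le g 0 h0K
      have h2 := (abs_le.1 ((g.abs_apply_le (ψ x)).trans (hψ x).2)).1
      have h3 : ‖(x : F)‖ ≤ ‖v - x‖ + ‖v‖ := by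
        have := norm_sub_norm_le (x : F) v
        rw [norm_sub_rev] at this; linarith
      have h4 : 2 * b * ‖v‖ / (b' - b) ≤ ‖v - x‖ := by linarith
      rw [div_le_iff₀ hbb] at h4
      have h5 := mul_le_mul_of_nonneg_left h3 hb.le
      rw [Submodule.coe_norm] at h2
      linarith

end DualBall

/-! ### A sufficient condition for the Gurarij property -/

section Criterion

variable {G : Type u} [NormedAddCommGroup G] [NormedSpace ℝ G]

/-- Every finite subset of `G` is approximated, to any accuracy, by points of some normed space
`X` for which the whole of `C(DualBall X, ℝ)` is isometrically embedded in `G`; the points of `X`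
are seen in `G` through the evaluation embedding `X → C(DualBall X, ℝ)`. -/
def Saturated (G : Type u) [NormedAddCommGroup G] [NormedSpace ℝ G] : Prop :=
  ∀ (k : ℕ) (y : Fin k → G) (δ : ℝ), 0 < δ →
    ∃ (X : Type u) (_ : NormedAddCommGroup X) (_ : NormedSpace ℝ X)
      (e : C(DualBall X, ℝ) →ₗᵢ[ℝ] G), ∀ i, ∃ x : X, ‖y i - e (evalMap X x)‖ ≤ δ

/-- `f` distorts norms by factors between `a` and `b`. -/
def Bounds {F : Type v} [NormedAddCommGroup F] [NormedSpace ℝ F] (f : F →ₗ.[ℝ] G) (a b : ℝ) :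
    Prop :=
  ∀ x : f.domain, a * ‖x‖ ≤ ‖f x‖ ∧ ‖f x‖ ≤ b * ‖x‖

variable {F : Type v} [NormedAddCommGroup F] [NormedSpace ℝ F]

/-- A linear map on a finite-dimensional space is close in operator norm to one with values in
some `X` as in `Saturated`: approximate the images of the vectors of a basis. -/
lemma Saturated.exists_approx (hG : Saturated G) (E₀ : Submodule ℝ F) [FiniteDimensional ℝ E₀]
    (ψ : E₀ →ₗ[ℝ] G) {δ : ℝ} (hδ : 0 < δ) :
    ∃ (X : Type u) (_ : NormedAddCommGroup X) (_ : NormedSpace ℝ X)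
      (e : C(DualBall X, ℝ) →ₗᵢ[ℝ] G) (ψ' : E₀ →ₗ[ℝ] X),
      ∀ x, ‖ψ x - e (evalMap X (ψ' x))‖ ≤ δ * ‖x‖ := by
  let B := Module.finBasis ℝ E₀
  obtain ⟨C, hC, hCb⟩ := B.exists_opNorm_le (F := G)
  obtain ⟨X, _, _, e, he⟩ := hG _ (fun i => ψ (B i)) (δ / C) (by positivity)
  choose z hz using he
  let ψ' : E₀ →ₗ[ℝ] X := B.constr ℝ z
  refine ⟨X, _, _, e, ψ', fun x => ?_⟩
  let u : E₀ →ₗ[ℝ] G := ψ - (e.comp (evalMap X)).toLinearMap ∘ₗ ψ'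
  have hu : ‖LinearMap.toContinuousLinearMap u‖ ≤ C * (δ / C) := by
    refine hCb (by positivity) fun i => ?_
    have : ψ' (B i) = z i := B.constr_basis ℝ z i
    simpa [u, this] using hz i
  rw [mul_div_cancel₀ _ hC.ne'] at hu
  exact (LinearMap.toContinuousLinearMap u).le_of_opNorm_le hu x

/-- Almost isometric extension by one vector `v`: `w` is a candidate image of `v`. The map `ψ` is
perturbed to a map `ψ'` into some `X`, to which `exists_one_point_continuousMap` applies. The error
of the perturbation is at most `δ * ‖x‖`, and `‖x‖` is controlled by `‖v - x‖` because `v` is at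
positive distance from `E₀`. -/
lemma Saturated.exists_one_point (hG : Saturated G) (E₀ : Submodule ℝ F)
    [FiniteDimensional ℝ E₀] (ψ : E₀ →ₗ[ℝ] G) {a a' b b' : ℝ} (ha' : 0 < a') (haa : a' < a)
    (hab : a ≤ b) (hb : b < b') (hψ : ∀ x, a * ‖x‖ ≤ ‖ψ x‖ ∧ ‖ψ x‖ ≤ b * ‖x‖)
    {v : F} (hv : v ∉ E₀) :
    ∃ w : G, ∀ x : E₀, a' * ‖v - x‖ ≤ ‖w - ψ x‖ ∧ ‖w - ψ x‖ ≤ b' * ‖v - x‖ := by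
  obtain ⟨C, hC0, hC⟩ : ∃ C : ℝ, 0 < C ∧ ∀ x : E₀, ‖x‖ ≤ C * ‖v - x‖ := by
    have hd : 0 < infDist v (E₀ : Set F) :=
      (E₀.closed_of_finiteDimensional.notMem_iff_infDist_pos ⟨0, E₀.zero_mem⟩).1 hv
    refine ⟨1 + ‖v‖ / infDist v (E₀ : Set F), by positivity, fun x => ?_⟩
    have h1 : infDist v (E₀ : Set F) ≤ ‖v - x‖ := by
      rw [← dist_eq_norm]; exact infDist_le_dist_of_mem x.2
    have h2 : ‖v‖ ≤ ‖v‖ / infDist v (E₀ : Set F) * ‖v - x‖ := by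
      rw [div_mul_eq_mul_div, le_div_iff₀ hd]; gcongr
    have h3 : ‖(x : F)‖ ≤ ‖v - x‖ + ‖v‖ := by
      have := norm_sub_norm_le (x : F) v
      rw [norm_sub_rev] at this; linarith
    rw [Submodule.coe_norm]
    linarith
  obtain ⟨δ, hδ, hδa, hδb⟩ : ∃ δ : ℝ, 0 < δ ∧ δ * (2 + C) ≤ a - a' ∧ δ * (2 + C) ≤ b' - b := by
    refine ⟨min (a - a') (b' - b) / (2 + C), ?_, ?_, ?_⟩
    · have := sub_pos.2 haa; have := sub_pos.2 hb; positivity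
    · rw [div_mul_cancel₀ _ (by positivity)]; exact min_le_left _ _
    · rw [div_mul_cancel₀ _ (by positivity)]; exact min_le_right _ _
  have hδC : 0 < δ * C := by positivity
  obtain ⟨X, _, _, e, ψ', h⟩ := hG.exists_approx E₀ ψ hδ
  have hψ' : ∀ x, (a - δ) * ‖x‖ ≤ ‖ψ' x‖ ∧ ‖ψ' x‖ ≤ (b + δ) * ‖x‖ := by
    intro x
    have h1 := h x
    have h2 := abs_le.1 ((abs_norm_sub_norm_le _ _).trans h1)
    rw [e.norm_map, (evalMap X).norm_map] at h2
    constructor <;> linarith [(hψ x).1, (hψ x).2]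
  obtain ⟨w, hw⟩ := exists_one_point_continuousMap E₀ ψ' (a := a - δ) (b := b + δ) (b' := b + 2 * δ)
    (by linarith) (by linarith) (by linarith) hψ' v
  refine ⟨e w, fun x => ?_⟩
  obtain ⟨h1, h2⟩ := hw x
  rw [← e.norm_map, map_sub] at h1 h2
  have h3 : |‖e w - ψ x‖ - ‖e w - e (evalMap X (ψ' x))‖| ≤ δ * C * ‖v - x‖ := by
    refine (abs_norm_sub_norm_le _ _).trans ?_
    rw [sub_sub_sub_cancel_left, norm_sub_rev]
    refine (h x).trans ?_
    rw [mul_assoc]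
    exact mul_le_mul_of_nonneg_left (hC x) hδ.le
  have h4 := abs_le.1 h3
  have h5 := mul_le_mul_of_nonneg_right hδa (norm_nonneg (v - x))
  have h6 := mul_le_mul_of_nonneg_right hδb (norm_nonneg (v - x))
  have h7 := mul_nonneg hδ.le (norm_nonneg (v - x))
  constructor <;> linarith

lemma Bounds.mono {f : F →ₗ.[ℝ] G} {a a' b b' : ℝ} (h : Bounds f a b) (ha : a' ≤ a)
    (hb : b ≤ b') : Bounds f a' b' := fun x =>
  ⟨(mul_le_mul_of_nonneg_right ha (norm_nonneg _)).trans (h x).1,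
    (h x).2.trans (mul_le_mul_of_nonneg_right hb (norm_nonneg _))⟩

lemma Saturated.exists_extend_insert [FiniteDimensional ℝ F] (hG : Saturated G)
    (f : F →ₗ.[ℝ] G) {a a' b b' : ℝ} (ha' : 0 < a') (haa : a' < a) (hab : a ≤ b) (hb : b < b')
    (hf : Bounds f a b) (v : F) :
    ∃ f' : F →ₗ.[ℝ] G, f ≤ f' ∧ v ∈ f'.domain ∧ Bounds f' a' b' := by
  by_cases hv : v ∈ f.domain
  · exact ⟨f, le_rfl, hv, hf.mono haa.le hb.le⟩
  obtain ⟨w, hw⟩ := hG.exists_one_point f.domain f.toFun ha' haa hab hb hf hv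
  have hv' : v ∈ (f.supSpanSingleton v w hv).domain :=
    Submodule.mem_sup_right (Submodule.mem_span_singleton_self v)
  refine ⟨f.supSpanSingleton v w hv, LinearPMap.left_le_sup _ _ _, hv', ?_⟩
  rintro ⟨z, hz⟩
  obtain ⟨x, hx, y, hy, rfl⟩ := Submodule.mem_sup.1 hz
  obtain ⟨c, rfl⟩ := Submodule.mem_span_singleton.1 hy
  rw [LinearPMap.supSpanSingleton_apply_mk _ _ _ _ _ hx]
  rcases eq_or_ne c 0 with rfl | hc
  · have := (hf.mono haa.le hb.le) ⟨x, hx⟩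
    rw [Submodule.coe_norm] at this ⊢
    simpa using this
  · -- homogeneity reduces to vectors of the form `v - x`
    obtain ⟨h1, h2⟩ := hw (-(c⁻¹ • ⟨x, hx⟩))
    have e1 : x + c • v = c • (v - ((-(c⁻¹ • ⟨x, hx⟩) : f.domain) : F)) := by
      simp [smul_add, smul_smul, hc, add_comm]
    have e2 : f ⟨x, hx⟩ + (RingHom.id ℝ) c • w = c • (w - f.toFun (-(c⁻¹ • ⟨x, hx⟩))) := by
      rw [map_neg, map_smul, sub_neg_eq_add, smul_add, smul_smul, mul_inv_cancel₀ hc, one_smul,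
        add_comm]
      rfl
    rw [Submodule.coe_norm]
    simp only [e2]
    rw [e1, norm_smul, norm_smul]
    have hc' := norm_nonneg c
    constructor
    · linarith [mul_le_mul_of_nonneg_left h1 hc']
    · linarith [mul_le_mul_of_nonneg_left h2 hc']

/-- Extension to finitely many vectors, one at a time; each step uses up part of the room between
`a'` and `a`, and between `b` and `b'`. -/
lemma Saturated.exists_extend [FiniteDimensional ℝ F] (hG : Saturated G) (S : Finset F) :
    ∀ (f : F →ₗ.[ℝ] G) {a a' b b' : ℝ}, 0 < a' → a' < a → a ≤ b → b < b' → Bounds f a b →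
      ∃ f' : F →ₗ.[ℝ] G, f ≤ f' ∧ (S : Set F) ⊆ f'.domain ∧ Bounds f' a' b' := by
  classical
  induction S using Finset.induction with
  | empty => exact fun f a a' b b' _ h2 _ h4 hf => ⟨f, le_rfl, by simp, hf.mono h2.le h4.le⟩
  | insert v S _ ih =>
    intro f a a' b b' h1 h2 h3 h4 hf
    obtain ⟨f₁, hf₁, hv, hb₁⟩ := hG.exists_extend_insert f (a' := (a' + a) / 2)
      (b' := (b + b') / 2) (by linarith) (by linarith) h3 (by linarith) hf v
    obtain ⟨f₂, hf₂, hS, hb₂⟩ := ih f₁ (a' := a') (b' := b') h1 (by linarith) (by linarith)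
      (by linarith) hb₁
    refine ⟨f₂, hf₁.trans hf₂, ?_, hb₂⟩
    rw [Finset.coe_insert, insert_subset_iff]
    exact ⟨hf₂.1 hv, hS⟩

theorem Saturated.gurarij (hG : Saturated G) : GurarijProperty G := by
  intro ε hε F _ _ _ E₀ ψ
  -- `1 / 2` keeps the lower bound positive when `ε ≥ 1`
  obtain ⟨S, hS⟩ := Module.Finite.fg_top (R := ℝ) (M := F)
  obtain ⟨f, hf, hSf, hb⟩ := hG.exists_extend S ⟨E₀, ψ.toLinearMap⟩ (a := 1)
    (a' := max (1 - ε) (1 / 2)) (b := 1) (b' := 1 + ε) (by positivity)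
    (by rw [max_lt_iff]; constructor <;> linarith) le_rfl (by linarith)
    (fun x => by
      have : ‖ψ x‖ = ‖x‖ := ψ.norm_map x
      change 1 * ‖x‖ ≤ ‖ψ x‖ ∧ ‖ψ x‖ ≤ 1 * ‖x‖
      simp [this])
  have htop : ∀ x : F, x ∈ f.domain := by
    have : (⊤ : Submodule ℝ F) ≤ f.domain := hS ▸ Submodule.span_le.2 hSf
    exact fun x => this trivial
  refine ⟨f.toFun ∘ₗ LinearMap.codRestrict f.domain LinearMap.id htop, fun x => ?_, fun x => ?_⟩
  · exact (hf.2 (x := x) (y := ⟨x, htop x⟩) rfl).symm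
  · have := hb.mono (le_max_left _ _) le_rfl ⟨x, htop x⟩
    exact this

end Criterion

/-! ### Isometric actions, their transfer to spaces of continuous functions, completion -/

section Action

/-- A separable real normed space with a pointwise continuous action of `H` by surjective linear
isometries. -/
structure IsoSpace (H : Type v) [Group H] [TopologicalSpace H] where
  /-- The underlying normed space. -/
  carrier : Type u
  [normed : NormedAddCommGroup carrier]
  [space : NormedSpace ℝ carrier]
  [separable : TopologicalSpace.SeparableSpace carrier]
  /-- The action, as a homomorphism into the isometry group. -/
  act : H →* (carrier ≃ₗᵢ[ℝ] carrier)
  continuous_act : ∀ x, Continuous fun h => act h x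

attribute [instance] IsoSpace.normed IsoSpace.space IsoSpace.separable

instance (H : Type v) [Group H] [TopologicalSpace H] :
    CoeSort (IsoSpace.{u} H) (Type u) := ⟨IsoSpace.carrier⟩

variable {H : Type v} [Group H] [TopologicalSpace H]

/-- The transposed action `g ↦ g ∘ h` on the dual ball. -/
def dualAct (X : IsoSpace.{u} H) (h : H) (g : DualBall X) : DualBall X :=
  DualBall.mk ((WeakDual.toStrongDual g.1).comp (X.act h : X →L[ℝ] X))
    (ContinuousLinearMap.opNorm_le_bound _ zero_le_one fun x => by
      have := g.abs_apply_le (X.act h x)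
      rw [LinearIsometryEquiv.norm_map] at this
      rw [one_mul]
      exact this)

lemma dualAct_apply (X : IsoSpace.{u} H) (h : H) (g : DualBall X) (x : X) :
    (dualAct X h g).1 x = g.1 (X.act h x) := rfl

/-- Joint continuity, which rests on the joint continuity of evaluation on the dual ball. -/
lemma continuous_dualAct (X : IsoSpace.{u} H) :
    Continuous fun p : H × DualBall X => dualAct X p.1 p.2 := by
  refine Continuous.subtype_mk (WeakDual.continuous_of_continuous_eval fun x => ?_) _
  exact DualBall.continuous_eval.comp
    (continuous_snd.prodMk ((X.continuous_act x).comp continuous_fst))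

lemma dualBall_ext {X : Type u} [NormedAddCommGroup X] [NormedSpace ℝ X] {g g' : DualBall X}
    (h : ∀ x, g.1 x = g'.1 x) : g = g' := Subtype.ext (DFunLike.ext _ _ h)

lemma dualAct_one (X : IsoSpace.{u} H) (g : DualBall X) : dualAct X 1 g = g :=
  dualBall_ext fun x => by simp [dualAct_apply]

lemma dualAct_mul (X : IsoSpace.{u} H) (h k : H) (g : DualBall X) :
    dualAct X (h * k) g = dualAct X k (dualAct X h g) :=
  dualBall_ext fun x => by simp [dualAct_apply]

/-- `dualAct` as a continuous map. -/
def dualActMap (X : IsoSpace.{u} H) (h : H) : C(DualBall X, DualBall X) :=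
  ⟨dualAct X h, (continuous_dualAct X).comp (Continuous.prodMk_right h)⟩

lemma norm_comp_dualActMap_le (X : IsoSpace.{u} H) (h : H) (f : C(DualBall X, ℝ)) :
    ‖f.comp (dualActMap X h)‖ ≤ ‖f‖ :=
  (ContinuousMap.norm_le _ (norm_nonneg _)).2 fun _ => f.norm_coe_le_norm _

lemma comp_dualActMap_comp (X : IsoSpace.{u} H) (h k : H) (f : C(DualBall X, ℝ)) :
    (f.comp (dualActMap X k)).comp (dualActMap X h) = f.comp (dualActMap X (h * k)) := by
  ext g
  exact congrArg f (dualAct_mul X h k g).symm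

lemma comp_dualActMap_one (X : IsoSpace.{u} H) (f : C(DualBall X, ℝ)) :
    f.comp (dualActMap X 1) = f := by
  ext g
  exact congrArg f (dualAct_one X g)

/-- The space `C(DualBall X, ℝ)`, on which `h` acts by precomposition with the transposed action.
This is a left action because `dualAct` reverses products, and it is pointwise continuous because
`dualAct` is jointly continuous and the dual ball is compact. -/
def IsoSpace.next (X : IsoSpace.{u} H) : IsoSpace.{u} H where
  carrier := C(DualBall X, ℝ)
  act :=
    { toFun := fun h =>
        { toFun := fun f => f.comp (dualActMap X h)
          invFun := fun f => f.comp (dualActMap X h⁻¹)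
          map_add' := fun _ _ => rfl
          map_smul' := fun _ _ => rfl
          left_inv := fun f => by
            simp only [comp_dualActMap_comp, inv_mul_cancel, comp_dualActMap_one]
          right_inv := fun f => by
            simp only [comp_dualActMap_comp, mul_inv_cancel, comp_dualActMap_one]
          norm_map' := fun f => by
            refine le_antisymm (norm_comp_dualActMap_le X h f) ?_
            have := norm_comp_dualActMap_le X h⁻¹ (f.comp (dualActMap X h))
            rwa [comp_dualActMap_comp, inv_mul_cancel, comp_dualActMap_one] at this }
      map_one' := LinearIsometryEquiv.ext fun f => comp_dualActMap_one X f
      map_mul' := fun h k => LinearIsometryEquiv.ext fun f => (comp_dualActMap_comp X h k f).symm }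
  continuous_act := fun f =>
    ContinuousMap.continuous_of_continuous_uncurry _ (f.continuous.comp (continuous_dualAct X))

/-- The evaluation embedding is equivariant. -/
lemma evalMap_act (X : IsoSpace.{u} H) (h : H) (x : X) :
    evalMap X (X.act h x) = X.next.act h (evalMap X x) := rfl

/-- The extension of a surjective isometry to the completion. -/
def complIso {X : Type u} [NormedAddCommGroup X] [NormedSpace ℝ X] (e : X ≃ₗᵢ[ℝ] X) :
    UniformSpace.Completion X ≃ₗᵢ[ℝ] UniformSpace.Completion X :=
  e.toLinearEquiv.extendOfIsometry
    UniformSpace.Completion.toComplₗᵢ.toLinearMap UniformSpace.Completion.toComplₗᵢ.toLinearMap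
    UniformSpace.Completion.denseRange_coe UniformSpace.Completion.denseRange_coe
    (fun x => by simp)

lemma complIso_coe {X : Type u} [NormedAddCommGroup X] [NormedSpace ℝ X] (e : X ≃ₗᵢ[ℝ] X)
    (x : X) : complIso e x = (e x : X) :=
  LinearEquiv.extendOfIsometry_eq e.toLinearEquiv
    UniformSpace.Completion.toComplₗᵢ.toLinearMap UniformSpace.Completion.toComplₗᵢ.toLinearMap
    UniformSpace.Completion.denseRange_coe UniformSpace.Completion.denseRange_coe
    (fun x => by simp) x

/-- The completion of `X` with the extended action. -/
def IsoSpace.completion (X : IsoSpace.{u} H) : IsoSpace.{u} H where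
  carrier := UniformSpace.Completion X
  act :=
    { toFun := fun h => complIso (X.act h)
      map_one' := by
        ext y
        induction y using UniformSpace.Completion.induction_on with
        | hp => exact isClosed_eq (complIso _).continuous continuous_id
        | ih x => simp [complIso_coe]
      map_mul' := fun h k => by
        ext y
        induction y using UniformSpace.Completion.induction_on with
        | hp =>
          exact isClosed_eq (complIso _).continuous
            ((complIso _).continuous.comp (complIso _).continuous)
        | ih x => simp [complIso_coe] }
  continuous_act := fun y => by
    -- orbit maps of nearby points are uniformly close, since `H` acts by isometries
    refine continuous_of_uniform_approx_of_continuous fun u hu => ?_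
    obtain ⟨ε, hε, hεu⟩ := Metric.mem_uniformity_dist.1 hu
    obtain ⟨x, hx⟩ := UniformSpace.Completion.denseRange_coe.exists_dist_lt y hε
    refine ⟨fun h => ((X.act h x : X) : UniformSpace.Completion X),
      (UniformSpace.Completion.continuous_coe X).comp (X.continuous_act x), fun h => hεu ?_⟩
    change dist (complIso (X.act h) y) ((X.act h x : X) : UniformSpace.Completion X) < ε
    rw [← complIso_coe, LinearIsometryEquiv.dist_map]
    exact hx

instance (X : IsoSpace.{u} H) : CompleteSpace X.completion :=
  inferInstanceAs (CompleteSpace (UniformSpace.Completion X))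

end Action

/-! ### Direct limits of chains of isometric embeddings -/

section Limit

variable {H : Type v} [Group H] [TopologicalSpace H] {X : ℕ → IsoSpace.{u} H}
  (ι : ∀ n, X n →ₗᵢ[ℝ] X (n + 1))

/-- The composite `X n → X (n + 1) → ⋯ → X m` of the maps of the chain. -/
def trans (n m : ℕ) (h : n ≤ m) : X n →ₗᵢ[ℝ] X m :=
  Nat.leRec (motive := fun m _ => X n →ₗᵢ[ℝ] X m) LinearIsometry.id
    (fun k _ g => (ι k).comp g) h

lemma trans_self (n : ℕ) : trans ι n n le_rfl = LinearIsometry.id := Nat.leRec_self _ _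

lemma trans_succ (n m : ℕ) (h : n ≤ m) :
    trans ι n (m + 1) (h.trans m.le_succ) = (ι m).comp (trans ι n m h) := Nat.leRec_succ _ _ h

instance : DirectedSystem (fun n => X n) (fun i j h => trans ι i j h) where
  map_self i x := by rw [trans_self]; rfl
  map_map k j i hij hjk x := by
    induction k, hjk using Nat.le_induction with
    | base => rw [trans_self]; rfl
    | succ k hk ih =>
      rw [trans_succ ι j k hk, trans_succ ι i k (hij.trans hk)]
      exact congrArg (ι k) ih

lemma trans_act (hι : ∀ n h x, ι n ((X n).act h x) = (X (n + 1)).act h (ι n x))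
    (n m : ℕ) (hnm : n ≤ m) (h : H) (x : X n) :
    trans ι n m hnm ((X n).act h x) = (X m).act h (trans ι n m hnm x) := by
  induction m, hnm using Nat.le_induction with
  | base => rw [trans_self]; rfl
  | succ k hk ih =>
    rw [trans_succ ι n k hk]
    simp only [LinearIsometry.coe_comp, Function.comp_apply, ih, hι]

/-- The algebraic direct limit of the chain. -/
def Lim : Type u := DirectLimit (fun n => X n) (trans ι)

instance : AddCommGroup (Lim ι) :=
  inferInstanceAs (AddCommGroup (DirectLimit (fun n => X n) (trans ι)))

instance : Module ℝ (Lim ι) :=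
  inferInstanceAs (Module ℝ (DirectLimit (fun n => X n) (trans ι)))

/-- The inclusion of a stage of the chain into the direct limit. -/
def Lim.of (n : ℕ) : X n →ₗ[ℝ] Lim ι := DirectLimit.Module.of ℝ ℕ (fun n => X n) (trans ι) n

/-- The norm computed at any stage; this is well defined as the transition maps are isometric. -/
instance : Norm (Lim ι) :=
  ⟨DirectLimit.lift _ (fun _ x => ‖x‖) fun _ _ _ x => ((trans ι _ _ _).norm_map x).symm⟩

lemma Lim.of_trans (n m : ℕ) (h : n ≤ m) (x : X n) :
    Lim.of ι m (trans ι n m h x) = Lim.of ι n x := DirectLimit.Module.of_f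

lemma Lim.norm_of (n : ℕ) (x : X n) : ‖Lim.of ι n x‖ = ‖x‖ := rfl

lemma Lim.exists_of (z : Lim ι) : ∃ n x, z = Lim.of ι n x := DirectLimit.exists_eq_mk _ z

/-- Two elements of the limit come from a common stage. -/
lemma Lim.exists_of₂ (z w : Lim ι) : ∃ n x y, z = Lim.of ι n x ∧ w = Lim.of ι n y :=
  DirectLimit.exists_eq_mk₂ _ z w

lemma Lim.core : NormedSpace.Core ℝ (Lim ι) where
  norm_nonneg z := by
    obtain ⟨n, x, rfl⟩ := Lim.exists_of ι z
    exact norm_nonneg x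
  norm_smul c z := by
    obtain ⟨n, x, rfl⟩ := Lim.exists_of ι z
    rw [← map_smul, Lim.norm_of, Lim.norm_of, norm_smul]
  norm_triangle z w := by
    obtain ⟨n, x, y, rfl, rfl⟩ := Lim.exists_of₂ ι z w
    rw [← map_add]
    exact norm_add_le x y
  norm_eq_zero_iff z := by
    constructor
    · obtain ⟨n, x, rfl⟩ := Lim.exists_of ι z
      intro h
      rw [Lim.norm_of, norm_eq_zero] at h
      rw [h, map_zero]
    · rintro rfl
      rw [← map_zero (Lim.of ι 0), Lim.norm_of, norm_zero]

instance : NormedAddCommGroup (Lim ι) := NormedAddCommGroup.ofCore (Lim.core ι)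

instance : NormedSpace ℝ (Lim ι) := NormedSpace.ofCore (Lim.core ι)

/-- `Lim.of` as a linear isometry. -/
def Lim.ofₗᵢ (n : ℕ) : X n →ₗᵢ[ℝ] Lim ι := ⟨Lim.of ι n, Lim.norm_of ι n⟩

instance : TopologicalSpace.SeparableSpace (Lim ι) := by
  rw [← TopologicalSpace.isSeparable_univ_iff]
  refine (TopologicalSpace.IsSeparable.iUnion fun n =>
    TopologicalSpace.isSeparable_range (Lim.ofₗᵢ ι n).continuous).mono fun z _ => ?_
  obtain ⟨n, x, rfl⟩ := Lim.exists_of ι z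
  exact mem_iUnion.2 ⟨n, x, rfl⟩

variable (hι : ∀ n h x, ι n ((X n).act h x) = (X (n + 1)).act h (ι n x))

/-- The limit of the actions of a single group element. -/
def Lim.actMap (h : H) : Lim ι →ₗ[ℝ] Lim ι :=
  DirectLimit.Module.lift ℝ ℕ _ _
    (fun n => Lim.of ι n ∘ₗ ((X n).act h).toLinearEquiv.toLinearMap) fun i j hij x => by
      have := trans_act ι hι i j hij h x
      simp only [LinearMap.comp_apply, LinearEquiv.coe_coe, LinearIsometryEquiv.coe_toLinearEquiv]
      rw [← this]
      exact Lim.of_trans ι i j hij _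

lemma Lim.actMap_of (h : H) (n : ℕ) (x : X n) :
    Lim.actMap ι hι h (Lim.of ι n x) = Lim.of ι n ((X n).act h x) := rfl

lemma Lim.actMap_one (z : Lim ι) : Lim.actMap ι hι 1 z = z := by
  obtain ⟨n, x, rfl⟩ := Lim.exists_of ι z
  rw [Lim.actMap_of, map_one]
  rfl

lemma Lim.actMap_mul (h k : H) (z : Lim ι) :
    Lim.actMap ι hι (h * k) z = Lim.actMap ι hι h (Lim.actMap ι hι k z) := by
  obtain ⟨n, x, rfl⟩ := Lim.exists_of ι z
  rw [Lim.actMap_of, Lim.actMap_of, Lim.actMap_of, map_mul]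
  rfl

/-- The direct limit of an equivariant chain, with the limit action. -/
def limSpace : IsoSpace.{u} H where
  carrier := Lim ι
  act :=
    { toFun := fun h =>
        { toLinearEquiv := LinearEquiv.ofLinearMap (Lim.actMap ι hι h) (Lim.actMap ι hι h⁻¹)
            (LinearMap.ext fun z => by simp [← Lim.actMap_mul, Lim.actMap_one])
            (LinearMap.ext fun z => by simp [← Lim.actMap_mul, Lim.actMap_one])
          norm_map' := fun z => by
            obtain ⟨n, x, rfl⟩ := Lim.exists_of ι z
            exact ((X n).act h).norm_map x }
      map_one' := LinearIsometryEquiv.ext (Lim.actMap_one ι hι)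
      map_mul' := fun h k => LinearIsometryEquiv.ext (Lim.actMap_mul ι hι h k) }
  continuous_act := fun z => by
    obtain ⟨n, x, rfl⟩ := Lim.exists_of ι z
    exact (Lim.ofₗᵢ ι n).continuous.comp ((X n).continuous_act x)

/-- The inclusion of a stage into the completed limit. -/
def toLimit (n : ℕ) : X n →ₗᵢ[ℝ] (limSpace ι hι).completion :=
  (UniformSpace.Completion.toComplₗᵢ (𝕜 := ℝ) (E := Lim ι)).comp (Lim.ofₗᵢ ι n)

lemma toLimit_act (n : ℕ) (h : H) (x : X n) :
    toLimit ι hι n ((X n).act h x) = (limSpace ι hι).completion.act h (toLimit ι hι n x) :=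
  (complIso_coe ((limSpace ι hι).act h) (Lim.of ι n x)).symm

lemma toLimit_trans (n m : ℕ) (h : n ≤ m) (x : X n) :
    toLimit ι hι m (trans ι n m h x) = toLimit ι hι n x :=
  congrArg (fun z : Lim ι => (z : UniformSpace.Completion (Lim ι)))
    (Lim.of_trans ι n m h x)

lemma toLimit_succ (n : ℕ) (x : X n) :
    toLimit ι hι (n + 1) (ι n x) = toLimit ι hι n x := by
  rw [← toLimit_trans ι hι n (n + 1) n.le_succ, trans_succ ι n n le_rfl, trans_self]
  rfl

/-- Finitely many points of the completed limit are approximable within a single stage. -/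
lemma exists_norm_sub_toLimit_le {k : ℕ} (y : Fin k → (limSpace ι hι).completion) {δ : ℝ}
    (hδ : 0 < δ) : ∃ n, ∀ i, ∃ x : X n, ‖y i - toLimit ι hι n x‖ ≤ δ := by
  have h1 : ∀ i, ∃ n, ∃ x : X n, ‖y i - toLimit ι hι n x‖ ≤ δ := by
    intro i
    obtain ⟨z, hz⟩ :=
      (UniformSpace.Completion.denseRange_coe (α := Lim ι)).exists_dist_lt (y i) hδ
    obtain ⟨n, x, rfl⟩ := Lim.exists_of ι z
    have hz' : dist (y i) (toLimit ι hι n x) < δ := hz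
    exact ⟨n, x, (dist_eq_norm (y i) (toLimit ι hι n x)).symm.le.trans hz'.le⟩
  choose n x hx using h1
  refine ⟨Finset.univ.sup n, fun i =>
    ⟨trans ι (n i) _ (Finset.le_sup (Finset.mem_univ i)) (x i), ?_⟩⟩
  rw [toLimit_trans]
  exact hx i

end Limit

/-! ### The tower of iterated function spaces -/

section Tower

variable {H : Type v} [Group H] [TopologicalSpace H]

/-- The iterates of `IsoSpace.next`. -/
def tower (X : IsoSpace.{u} H) : ℕ → IsoSpace.{u} H
  | 0 => X
  | n + 1 => (tower X n).next

/-- The inclusion of each stage of the tower into the following one. -/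
def towerMap (X : IsoSpace.{u} H) (n : ℕ) : tower X n →ₗᵢ[ℝ] tower X (n + 1) :=
  evalMap (tower X n)

lemma towerMap_act (X : IsoSpace.{u} H) (n : ℕ) (h : H) (x : tower X n) :
    towerMap X n ((tower X n).act h x) = (tower X (n + 1)).act h (towerMap X n x) :=
  evalMap_act (tower X n) h x

/-- The completed limit of the tower over `X`. -/
def hull (X : IsoSpace.{u} H) : IsoSpace.{u} H :=
  (limSpace (towerMap X) (towerMap_act X)).completion

instance (X : IsoSpace.{u} H) : CompleteSpace (hull X) :=
  inferInstanceAs (CompleteSpace (limSpace (towerMap X) (towerMap_act X)).completion)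

/-- Finite sets are approximated within a stage `tower X n`, whose function space
`C(DualBall (tower X n), ℝ)` is the next stage. -/
lemma saturated_hull (X : IsoSpace.{u} H) : Saturated (hull X) := by
  intro k y δ hδ
  obtain ⟨n, hn⟩ := exists_norm_sub_toLimit_le (towerMap X) (towerMap_act X) y hδ
  refine ⟨tower X n, inferInstance, inferInstance,
    toLimit (towerMap X) (towerMap_act X) (n + 1), fun i => ?_⟩
  obtain ⟨x, hx⟩ := hn i
  rw [← toLimit_succ] at hx
  exact ⟨x, hx⟩

end Tower

end GurarijExt

end

/-- Every separable real Banach space `E` embeds linearly isometrically into a separable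
real Banach space `G` with the Gurarij property, in such a way that there is a group
homomorphism `Θ : Iso_L(E) → Iso_L(G)`, continuous for the topologies of pointwise
convergence, with `Θ φ` extending `φ` for every `φ`. -/
theorem exists_gurarij_g_extension (E : Type u) [NormedAddCommGroup E] [NormedSpace ℝ E]
    [CompleteSpace E] [TopologicalSpace.SeparableSpace E] :
    ∃ (G : Type u) (_ : NormedAddCommGroup G) (_ : NormedSpace ℝ G) (_ : CompleteSpace G),
      TopologicalSpace.SeparableSpace G ∧ GurarijProperty G ∧
      ∃ (j : E →ₗᵢ[ℝ] G) (Θ : (E ≃ₗᵢ[ℝ] E) → (G ≃ₗᵢ[ℝ] G)),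
        (∀ φ ψ : E ≃ₗᵢ[ℝ] E, Θ (φ * ψ) = Θ φ * Θ ψ) ∧
        @Continuous _ _ (linIsoPtTop E) (linIsoPtTop G) Θ ∧
        ∀ (φ : E ≃ₗᵢ[ℝ] E) (a : E), Θ φ (j a) = j (φ a) := by
  let _ : TopologicalSpace (E ≃ₗᵢ[ℝ] E) := linIsoPtTop E
  let X : GurarijExt.IsoSpace.{u} (E ≃ₗᵢ[ℝ] E) :=
    { carrier := E
      act := MonoidHom.id _
      continuous_act := fun x => (continuous_apply x).comp continuous_induced_dom }
  refine ⟨GurarijExt.hull X, inferInstance, inferInstance,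
    inferInstance, inferInstance,
    (GurarijExt.saturated_hull X).gurarij,
    GurarijExt.toLimit (GurarijExt.towerMap X) (GurarijExt.towerMap_act X) 0,
    (GurarijExt.hull X).act, map_mul _, ?_, fun φ a => ?_⟩
  · exact continuous_induced_rng.2 (continuous_pi (GurarijExt.hull X).continuous_act)
  · exact (GurarijExt.toLimit_act (GurarijExt.towerMap X) (GurarijExt.towerMap_act X) 0 φ a).symm
end
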